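/- arXiv:1009.4613 — 2 statements merged into one kernel-verified Lean document; each statement's English description precedes it below -/
import Mathlib

section
/- Suppose c is continuous and bounded on [0,∞)×ℝ and v_0 is continuous on ℝ and vanishes at infinity. Then for every x ∈ ℝ, v_n^{(t)}(t,x) = ∫_{ℝⁿ} (2π sinh(2t/n))^{−n/2} v_0(σ_n + x/cosh(2t/n)^n) · exp(−(1/2)(cosh(2t/n)/sinh(2t/n)) ∑_{j=1}^n (σ_{n−j+1} − σ_{n−j}/cosh(2t/n))²) · exp(−(1/2)(sinh(2t/n)/cosh(2t/n)) ∑_{j=1}^n (σ_{n−j} + x/cosh(2t/n)^{n−j})²) · exp(−(t/n) ∑_{j=1}^n c(jt/n, σ_{n−j} + x/cosh(2t/n)^{n−j})) dσ_1 … dσ_n, with the convention σ_0 = 0. -/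
/-!
Over one splitting step the scheme is an integral operator whose kernel is the Mehler kernel of
`U_{t/n}` times a potential factor depending on the outgoing point only. With `C = cosh(2t/n)` and
`S = sinh(2t/n)`, completing the square gives
`(x² + z²) C/S - 2xz/S = (C/S) (z - x/C)² + (S/C) x²` (`mehler_exponent`), so the kernel is a
Gaussian in `z - x/C` times functions of `x`.

Iterating `n` kernels and applying Fubini's theorem expresses the value at time `t` as an integral
over paths `x = z₀, z₁, …, z_n` (`iterate_eq_integral_pathWeight`). Integrability of the path
weight is proved together with an `L¹` bound uniform in the starting point
(`integrable_pathWeight`), using that `c` and `v₀` are bounded and that the Gaussian mass does not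
depend on its centre.

Finally the translation `z_i = σ_i + x / C^i` of `ℝⁿ` preserves Lebesgue measure and turns
`z_{i+1} - z_i / C` into `σ_{i+1} - σ_i / C`, which yields the stated integrand
(`pathWeight_translate`).
-/


open MeasureTheory Real Filter Topology

noncomputable section


/-- The Mehler semigroup of the harmonic oscillator. -/
def mehler (s : ℝ) (g : ℝ → ℝ) (x : ℝ) : ℝ :=
  ∫ z : ℝ, (Real.sqrt (2 * π * Real.sinh (2 * s)))⁻¹ *
    Real.exp (-(1 / 2) * ((x ^ 2 + z ^ 2) * Real.cosh (2 * s) / Real.sinh (2 * s)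
      - 2 * x * z / Real.sinh (2 * s))) * g z

/-- The values of the approximating sequence `v_n^{(t)}` at the subdivision nodes
`τ_k = k t / (2n)`:  an even step applies the Mehler semigroup `U_{t/n}` and an odd
step multiplies by `exp(−(t/n) c(τ_{k+1}, x))`. -/
def atNode (v₀ : ℝ → ℝ) (c : ℝ → ℝ → ℝ) (t : ℝ) (n : ℕ) : ℕ → ℝ → ℝ
  | 0 => v₀
  | k + 1 =>
      if k % 2 = 0 then mehler (t / n) (atNode v₀ c t n k)
      else fun x =>
        Real.exp (-(t / n) * c ((k + 1) * t / (2 * n)) x) * atNode v₀ c t n k x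

/-- The approximating function `v_n^{(t)}` of the paper: on the even interval
`[τ_{2k}, τ_{2k+1}]` it solves the (doubled) harmonic-oscillator heat equation, i.e.
`v_n^{(t)}(τ,·) = U_{2(τ−τ_{2k})} v_n^{(t)}(τ_{2k},·)`, and on the odd interval
`[τ_{2k+1}, τ_{2k+2}]` it is `exp(−2c(τ_{2k+2},x)(τ−τ_{2k+1})) v_n^{(t)}(τ_{2k+1},x)`. -/
def vApprox (v₀ : ℝ → ℝ) (c : ℝ → ℝ → ℝ) (t : ℝ) (n : ℕ) (τ x : ℝ) : ℝ :=
  let k : ℕ := min ⌊2 * n * τ / t⌋₊ (2 * n - 1)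
  let τk : ℝ := k * t / (2 * n)
  if k % 2 = 0 then
    if τ = τk then atNode v₀ c t n k x else mehler (2 * (τ - τk)) (atNode v₀ c t n k) x
  else
    Real.exp (-2 * c ((k + 1) * t / (2 * n)) x * (τ - τk)) * atNode v₀ c t n k x

/-- Value of the finite sequence `σ_1, …, σ_n` at an index `j ∈ {0, …, n}`, with the
convention `σ_0 = 0`. -/
def seqVal {n : ℕ} (σ : Fin n → ℝ) (j : ℕ) : ℝ :=
  if h : 1 ≤ j ∧ j ≤ n then σ ⟨j - 1, by omega⟩ else 0

/-! ### Iterated kernels as integrals over paths -/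

/-- The vertices `x = z₀, z₁, …, z_m` of a path started at `x`; here `z i` is `z_{i+1}`. -/
def path {m : ℕ} (x : ℝ) (z : Fin m → ℝ) : Fin (m + 1) → ℝ := Fin.cons x z

/-- The weight `K_m(z₀,z₁) K_{m-1}(z₁,z₂) ⋯ K_1(z_{m-1},z_m) f(z_m)` of a path started at
`z₀ = x`. The kernel index decreases along the path because it counts the steps still to be
made, that is, the time at the current vertex. -/
def pathWeight (K : ℕ → ℝ → ℝ → ℝ) (f : ℝ → ℝ) (m : ℕ) (x : ℝ) (z : Fin m → ℝ) : ℝ :=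
  (∏ i : Fin m, K (m - i) (path x z i.castSucc) (path x z i.succ)) * f (path x z (Fin.last m))

lemma pathWeight_cons (K : ℕ → ℝ → ℝ → ℝ) (f : ℝ → ℝ) (m : ℕ) (x y : ℝ) (z : Fin m → ℝ) :
    pathWeight K f (m + 1) x (Fin.cons y z : Fin (m + 1) → ℝ)
      = K (m + 1) x y * pathWeight K f m y z := by
  unfold pathWeight path
  rw [Fin.prod_univ_succ, ← Fin.succ_last]
  simp only [Fin.castSucc_zero, Fin.cons_zero, Fin.cons_succ, ← Fin.succ_castSucc, Fin.val_zero,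
    Fin.val_succ, Nat.sub_zero, Nat.add_sub_add_right, mul_assoc]

lemma continuous_pathWeight {K : ℕ → ℝ → ℝ → ℝ} {f : ℝ → ℝ}
    (hK : ∀ j, Continuous fun p : ℝ × ℝ => K j p.1 p.2) (hf : Continuous f) (m : ℕ) :
    Continuous fun p : ℝ × (Fin m → ℝ) => pathWeight K f m p.1 p.2 := by
  have hp : Continuous fun p : ℝ × (Fin m → ℝ) => path p.1 p.2 := by
    refine continuous_pi fun i => ?_
    refine Fin.cases ?_ (fun j => ?_) i
    · simpa [path] using continuous_fst
    · simp only [path, Fin.cons_succ]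
      exact (continuous_apply j).comp continuous_snd
  have hpi : ∀ i, Continuous fun p : ℝ × (Fin m → ℝ) => path p.1 p.2 i :=
    fun i => (continuous_apply i).comp hp
  unfold pathWeight
  refine Continuous.mul (continuous_finsetProd _ fun i _ => ?_) (hf.comp (hpi _))
  exact (hK (m - i)).comp ((hpi i.castSucc).prodMk (hpi i.succ))

/-- `ℝ^{m+1}` splits as `ℝ × ℝ^m`, the first coordinate being the first vertex after the start. -/
lemma measurePreserving_cons (m : ℕ) :
    MeasurePreserving (MeasurableEquiv.piFinSuccAbove (fun _ : Fin (m + 1) => ℝ) 0).symm :=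
  (volume_preserving_piFinSuccAbove (fun _ : Fin (m + 1) => ℝ) 0).symm _

lemma piFinSuccAbove_symm_eq_cons {m : ℕ} (p : ℝ × (Fin m → ℝ)) :
    (MeasurableEquiv.piFinSuccAbove (fun _ : Fin (m + 1) => ℝ) 0).symm p
      = (Fin.cons p.1 p.2 : Fin (m + 1) → ℝ) := by
  simp [MeasurableEquiv.piFinSuccAbove, Fin.consEquiv]

/-- If every kernel `K j x` is dominated by a translate of a fixed integrable function, then path
weights are integrable, with an `L¹` norm bounded uniformly in the starting point. The uniformity
is what allows the bound to be propagated through one more step. -/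
lemma integrable_pathWeight {K : ℕ → ℝ → ℝ → ℝ} {f g a : ℝ → ℝ} {D : ℝ}
    (hK : ∀ j, Continuous fun p : ℝ × ℝ => K j p.1 p.2) (hf : Continuous f)
    (hD : ∀ x, |f x| ≤ D) (hg : Integrable g) (hKg : ∀ j x z, |K j x z| ≤ g (z - a x)) (m : ℕ) :
    ∃ B : ℝ, 0 ≤ B ∧ ∀ x, Integrable (pathWeight K f m x) ∧
      ∫ z, ‖pathWeight K f m x z‖ ≤ B := by
  induction m with
  | zero =>
    refine ⟨D, (abs_nonneg _).trans (hD 0), fun x => ⟨?_, ?_⟩⟩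
    · exact Integrable.of_finite
    · rw [integral_unique]
      simpa [pathWeight, measureReal_def, volume_pi] using hD _
  | succ m ih =>
    obtain ⟨B, hB0, hB⟩ := ih
    refine ⟨(∫ y, g y) * B, mul_nonneg (integral_nonneg fun y => ?_) hB0, fun x => ?_⟩
    · have := (abs_nonneg _).trans (hKg 0 0 (y + a 0))
      simpa using this
    have hdom : Integrable fun y => g (y - a x) * B :=
      (hg.comp_sub_right (a x)).mul_const B
    have hKc : Continuous fun y => K (m + 1) x y :=
      (hK (m + 1)).comp (continuous_const.prodMk continuous_id)
    have hcont : Continuous fun p : ℝ × (Fin m → ℝ) =>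
        K (m + 1) x p.1 * pathWeight K f m p.1 p.2 :=
      (hKc.comp continuous_fst).mul (continuous_pathWeight hK hf m)
    have hinner : ∀ y, ∫ z, ‖K (m + 1) x y * pathWeight K f m y z‖ ≤ g (y - a x) * B := by
      intro y
      simp only [norm_mul]
      rw [integral_const_mul]
      exact mul_le_mul (hKg _ _ _) (hB y).2 (integral_nonneg fun _ => norm_nonneg _)
        ((abs_nonneg _).trans (hKg (m + 1) x y))
    have hint : Integrable (fun p : ℝ × (Fin m → ℝ) =>
        K (m + 1) x p.1 * pathWeight K f m p.1 p.2) (volume.prod volume) := by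
      rw [integrable_prod_iff hcont.aestronglyMeasurable]
      refine ⟨.of_forall fun y => (hB y).1.const_mul (K (m + 1) x y), ?_⟩
      refine hdom.mono' hcont.norm.stronglyMeasurable.integral_prod_right'.aestronglyMeasurable
        (.of_forall fun y => ?_)
      rw [Real.norm_of_nonneg (integral_nonneg fun _ => norm_nonneg _)]
      exact hinner y
    have hcons : (fun p => pathWeight K f (m + 1) x
          ((MeasurableEquiv.piFinSuccAbove (fun _ : Fin (m + 1) => ℝ) 0).symm p))
        = fun p : ℝ × (Fin m → ℝ) => K (m + 1) x p.1 * pathWeight K f m p.1 p.2 := by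
      funext p
      rw [piFinSuccAbove_symm_eq_cons, pathWeight_cons]
    constructor
    · rw [← (measurePreserving_cons m).integrable_comp_emb (MeasurableEquiv.measurableEmbedding _)]
      exact hint.congr (.of_forall fun p => (congrFun hcons p).symm)
    · rw [← (measurePreserving_cons m).integral_comp']
      have : (fun p => ‖pathWeight K f (m + 1) x
          ((MeasurableEquiv.piFinSuccAbove (fun _ : Fin (m + 1) => ℝ) 0).symm p)‖)
          = fun p : ℝ × (Fin m → ℝ) => ‖K (m + 1) x p.1 * pathWeight K f m p.1 p.2‖ :=
        funext fun p => congrArg norm (congrFun hcons p)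
      rw [this, Measure.volume_eq_prod, integral_prod _ hint.norm]
      calc ∫ y, ∫ z, ‖K (m + 1) x y * pathWeight K f m y z‖
          ≤ ∫ y, g (y - a x) * B := integral_mono hint.integral_norm_prod_left hdom hinner
        _ = (∫ y, g y) * B := by rw [integral_mul_const, integral_sub_right_eq_self g]

/-- Applying the kernels `K 1, …, K m` successively to `f` gives the integral of the path weight:
this is Fubini's theorem, one step of the path at a time. -/
lemma iterate_eq_integral_pathWeight {K : ℕ → ℝ → ℝ → ℝ} {f g a : ℝ → ℝ} {D : ℝ}
    (hK : ∀ j, Continuous fun p : ℝ × ℝ => K j p.1 p.2) (hf : Continuous f)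
    (hD : ∀ x, |f x| ≤ D) (hg : Integrable g) (hKg : ∀ j x z, |K j x z| ≤ g (z - a x))
    {W : ℕ → ℝ → ℝ} (hW0 : W 0 = f) (hW : ∀ m x, W (m + 1) x = ∫ y, K (m + 1) x y * W m y)
    (m : ℕ) (x : ℝ) : W m x = ∫ z, pathWeight K f m x z := by
  induction m generalizing x with
  | zero =>
    rw [integral_unique]
    simp [pathWeight, path, measureReal_def, volume_pi, hW0]
  | succ m ih =>
    obtain ⟨B, -, hB⟩ := integrable_pathWeight hK hf hD hg hKg (m + 1)
    have hint := (hB x).1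
    rw [← (measurePreserving_cons m).integrable_comp_emb
      (MeasurableEquiv.measurableEmbedding _)] at hint
    rw [hW, ← (measurePreserving_cons m).integral_comp', Measure.volume_eq_prod,
      integral_prod (fun p => pathWeight K f (m + 1) x
        ((MeasurableEquiv.piFinSuccAbove (fun _ : Fin (m + 1) => ℝ) 0).symm p)) hint]
    refine integral_congr_ae (.of_forall fun y => ?_)
    simp only [piFinSuccAbove_symm_eq_cons, pathWeight_cons]
    rw [integral_const_mul, ← ih]

/-! ### The kernel of one splitting step -/

/-- The kernel of one full splitting step: the Mehler kernel of `U_{t/n}`, with its exponent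
written in completed-square form, followed by the potential factor at time `jt/n`. -/
def stepKernel (c : ℝ → ℝ → ℝ) (t : ℝ) (n j : ℕ) (x z : ℝ) : ℝ :=
  (√(2 * π * sinh (2 * t / n)))⁻¹ *
    exp (-(1 / 2) * (cosh (2 * t / n) / sinh (2 * t / n)) * (z - x / cosh (2 * t / n)) ^ 2) *
    exp (-(1 / 2) * (sinh (2 * t / n) / cosh (2 * t / n)) * x ^ 2) *
    exp (-(t / n) * c (j * t / n) x)

/-- Completing the square in the Mehler exponent, by `cosh² - sinh² = 1`. -/
lemma mehler_exponent {r : ℝ} (hr : 0 < r) (x z : ℝ) :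
    -(1 / 2) * ((x ^ 2 + z ^ 2) * cosh r / sinh r - 2 * x * z / sinh r)
      = -(1 / 2) * (cosh r / sinh r) * (z - x / cosh r) ^ 2
        + -(1 / 2) * (sinh r / cosh r) * x ^ 2 := by
  have hS : sinh r ≠ 0 := (sinh_pos_iff.2 hr).ne'
  have hC : cosh r ≠ 0 := (cosh_pos r).ne'
  have h := cosh_sq r
  field_simp
  linear_combination (-x ^ 2) * h

lemma atNode_step (v₀ : ℝ → ℝ) (c : ℝ → ℝ → ℝ) {t : ℝ} (ht : 0 < t) {n : ℕ} (hn : 1 ≤ n)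
    (m : ℕ) (x : ℝ) :
    atNode v₀ c t n (2 * (m + 1)) x
      = ∫ z, stepKernel c t n (m + 1) x z * atNode v₀ c t n (2 * m) z := by
  have hn0 : (0 : ℝ) < n := by exact_mod_cast hn
  have hr : 0 < 2 * t / n := by positivity
  have h2 : 2 * (t / n) = 2 * t / n := by ring
  have hodd : (2 * m + 1) % 2 ≠ 0 := by omega
  have htime : (((2 * m + 1 : ℕ) : ℝ) + 1) * t / (2 * n) = ((m + 1 : ℕ) : ℝ) * t / n := by
    push_cast
    field_simp
    ring
  rw [show 2 * (m + 1) = 2 * m + 1 + 1 by ring, atNode, if_neg hodd, atNode,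
    if_pos (Nat.mul_mod_right 2 m), htime]
  simp only [mehler, h2]
  rw [← integral_const_mul]
  refine integral_congr_ae (.of_forall fun z => ?_)
  simp only [stepKernel]
  rw [mehler_exponent hr, exp_add]
  ring

/-- At the final time, the index chosen by `vApprox` is the last odd one, `2n - 1`, and the
remaining time is exactly one subinterval. -/
lemma vApprox_final (v₀ : ℝ → ℝ) (c : ℝ → ℝ → ℝ) {t : ℝ} (ht : 0 < t) {n : ℕ} (hn : 1 ≤ n)
    (x : ℝ) : vApprox v₀ c t n t x = atNode v₀ c t n (2 * n) x := by
  have hn0 : (0 : ℝ) < n := by exact_mod_cast hn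
  have hfloor : ⌊2 * (n : ℝ) * t / t⌋₊ = 2 * n := by
    rw [mul_div_cancel_right₀ _ ht.ne']
    exact_mod_cast Nat.floor_natCast (2 * n)
  have hmin : min (2 * n) (2 * n - 1) = 2 * n - 1 := by omega
  have hodd : (2 * n - 1) % 2 ≠ 0 := by omega
  obtain ⟨p, rfl⟩ : ∃ p, n = p + 1 := ⟨n - 1, by omega⟩
  simp only [vApprox, hfloor, hmin, if_neg hodd]
  have hp : 2 * (p + 1) - 1 = 2 * p + 1 := by omega
  rw [hp] at hodd ⊢
  rw [show 2 * (p + 1) = 2 * p + 1 + 1 by ring, atNode.eq_2 v₀ c t (p + 1) (2 * p + 1),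
    if_neg hodd]
  congr 2
  have : t - ((2 * p + 1 : ℕ) : ℝ) * t / (2 * ((p + 1 : ℕ) : ℝ))
      = t / ((p + 1 : ℕ) : ℝ) / 2 := by
    push_cast
    field_simp
    ring
  rw [this]
  ring

/-! ### The translation to the variables `σ` -/

/-- The translated path has vertices `σ_i + x / C^i` for all `0 ≤ i ≤ n`; at `i = 0` this is the
starting point `x`, by the convention `σ_0 = 0`. -/
lemma path_translate {n : ℕ} (x C : ℝ) (σ : Fin n → ℝ) (i : Fin (n + 1)) :
    path x (σ + fun i : Fin n => x / C ^ ((i : ℕ) + 1)) i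
      = seqVal σ i + x / C ^ (i : ℕ) := by
  refine Fin.cases ?_ (fun j => ?_) i
  · simp [path, seqVal]
  · simp [path, seqVal]

/-- After the translation `z_i = σ_i + x / cosh^i`, the differences `z_{i+1} - z_i / cosh` become
`σ_{i+1} - σ_i / cosh`, so the path weight becomes the integrand of the iterated integral. -/
lemma pathWeight_translate (v₀ : ℝ → ℝ) (c : ℝ → ℝ → ℝ) {t : ℝ} (ht : 0 < t) {n : ℕ}
    (hn : 1 ≤ n) (x : ℝ) (σ : Fin n → ℝ) :
    pathWeight (stepKernel c t n) v₀ n x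
        (σ + fun i : Fin n => x / cosh (2 * t / n) ^ ((i : ℕ) + 1)) =
      (2 * π * Real.sinh (2 * t / n)) ^ (-(n : ℝ) / 2) *
        v₀ (seqVal σ n + x / Real.cosh (2 * t / n) ^ n) *
        Real.exp (-(1 / 2) * (Real.cosh (2 * t / n) / Real.sinh (2 * t / n)) *
          ∑ j ∈ Finset.Icc 1 n,
            (seqVal σ (n - j + 1) - seqVal σ (n - j) / Real.cosh (2 * t / n)) ^ 2) *
        Real.exp (-(1 / 2) * (Real.sinh (2 * t / n) / Real.cosh (2 * t / n)) *
          ∑ j ∈ Finset.Icc 1 n,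
            (seqVal σ (n - j) + x / Real.cosh (2 * t / n) ^ (n - j)) ^ 2) *
        Real.exp (-(t / n) * ∑ j ∈ Finset.Icc 1 n,
          c (j * t / n) (seqVal σ (n - j) + x / Real.cosh (2 * t / n) ^ (n - j))) := by
  have hn0 : (0 : ℝ) < n := by exact_mod_cast hn
  have hr : 0 < 2 * t / n := by positivity
  have hS : 0 < sinh (2 * t / n) := sinh_pos_iff.2 hr
  have hC : cosh (2 * t / n) ≠ 0 := (cosh_pos _).ne'
  have hA : 0 < 2 * π * sinh (2 * t / n) := by positivity
  have hrefl : ∀ F : ℕ → ℝ, ∏ i ∈ Finset.range n, F (n - i) = ∏ j ∈ Finset.Icc 1 n, F j := by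
    intro F
    refine Finset.prod_bij' (fun i _ => n - i) (fun j _ => n - j) ?_ ?_ ?_ ?_ ?_ <;>
      intro i hi <;> simp only [Finset.mem_range, Finset.mem_Icc] at * <;> omega
  have hpow : (2 * π * sinh (2 * t / n)) ^ (-(n : ℝ) / 2)
      = ((√(2 * π * sinh (2 * t / n)))⁻¹) ^ n := by
    rw [sqrt_eq_rpow, ← rpow_neg hA.le, ← rpow_natCast, ← rpow_mul hA.le]
    congr 1
    ring
  unfold pathWeight
  simp only [path_translate, Fin.val_castSucc, Fin.val_succ, Fin.val_last]
  rw [Fin.prod_univ_eq_prod_range (fun i => stepKernel c t n (n - i)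
    (seqVal σ i + x / cosh (2 * t / n) ^ i)
    (seqVal σ (i + 1) + x / cosh (2 * t / n) ^ (i + 1))) n]
  have hback : ∀ i ∈ Finset.range n, stepKernel c t n (n - i)
      (seqVal σ i + x / cosh (2 * t / n) ^ i)
      (seqVal σ (i + 1) + x / cosh (2 * t / n) ^ (i + 1))
      = (fun j => stepKernel c t n j (seqVal σ (n - j) + x / cosh (2 * t / n) ^ (n - j))
      (seqVal σ (n - j + 1) + x / cosh (2 * t / n) ^ (n - j + 1))) (n - i) := by
    intro i hi
    have : n - (n - i) = i := by
      have := Finset.mem_range.1 hi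
      omega
    simp only [this]
  rw [Finset.prod_congr rfl hback, hrefl fun j => stepKernel c t n j
    (seqVal σ (n - j) + x / cosh (2 * t / n) ^ (n - j))
    (seqVal σ (n - j + 1) + x / cosh (2 * t / n) ^ (n - j + 1))]
  have hdiff : ∀ k : ℕ, seqVal σ (k + 1) + x / cosh (2 * t / n) ^ (k + 1)
      - (seqVal σ k + x / cosh (2 * t / n) ^ k) / cosh (2 * t / n)
      = seqVal σ (k + 1) - seqVal σ k / cosh (2 * t / n) := by
    intro k
    field_simp
    ring
  simp only [stepKernel, hdiff, Finset.prod_mul_distrib, ← exp_sum, ← Finset.mul_sum,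
    Finset.prod_const, Nat.card_Icc, Nat.add_sub_cancel]
  rw [hpow]
  ring

/-! ### Continuity and domination of the step kernel -/

lemma continuous_stepKernel {c : ℝ → ℝ → ℝ}
    (hc : ContinuousOn (fun p : ℝ × ℝ => c p.1 p.2) (Set.Ici 0 ×ˢ Set.univ))
    {t : ℝ} (ht : 0 < t) (n j : ℕ) :
    Continuous fun p : ℝ × ℝ => stepKernel c t n j p.1 p.2 := by
  have h : Continuous fun p : ℝ × ℝ => c (j * t / n) p.1 :=
    hc.comp_continuous (f := fun p : ℝ × ℝ => ((j * t / n : ℝ), p.1)) (by fun_prop)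
      fun p => ⟨Set.mem_Ici.2 (by positivity), Set.mem_univ _⟩
  unfold stepKernel
  exact Continuous.mul (by fun_prop) (continuous_exp.comp (continuous_const.mul h))

/-- The factor `exp(-(1/2) tanh · x²)` is at most `1`, so each step kernel is dominated by a
Gaussian centred at `x / cosh`. -/
lemma abs_stepKernel_le {c : ℝ → ℝ → ℝ} {M : ℝ}
    (hM : ∀ s ∈ Set.Ici (0 : ℝ), ∀ x : ℝ, |c s x| ≤ M) {t : ℝ} (ht : 0 < t) {n : ℕ} (hn : 1 ≤ n)
    (j : ℕ) (x z : ℝ) :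
    |stepKernel c t n j x z| ≤ (√(2 * π * sinh (2 * t / n)))⁻¹ * exp (t / n * M) *
      exp (-(1 / 2 * (cosh (2 * t / n) / sinh (2 * t / n))) * (z - x / cosh (2 * t / n)) ^ 2) := by
  have hn0 : (0 : ℝ) < n := by exact_mod_cast hn
  have hS : 0 < sinh (2 * t / n) := sinh_pos_iff.2 (by positivity)
  have hC : 0 < cosh (2 * t / n) := cosh_pos _
  have hpos : 0 ≤ stepKernel c t n j x z := by
    unfold stepKernel
    positivity
  have h1 : exp (-(1 / 2) * (sinh (2 * t / n) / cosh (2 * t / n)) * x ^ 2) ≤ 1 := by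
    rw [exp_le_one_iff]
    have : 0 ≤ sinh (2 * t / n) / cosh (2 * t / n) * x ^ 2 := by positivity
    linarith
  have h2 : exp (-(t / n) * c (j * t / n) x) ≤ exp (t / n * M) := by
    rw [exp_le_exp, neg_mul, ← mul_neg]
    have := (abs_le.1 (hM (j * t / n) (Set.mem_Ici.2 (by positivity)) x)).1
    exact mul_le_mul_of_nonneg_left (by linarith) (by positivity)
  rw [abs_of_nonneg hpos]
  unfold stepKernel
  rw [← neg_mul]
  set G := exp (-(1 / 2) * (cosh (2 * t / n) / sinh (2 * t / n)) * (z - x / cosh (2 * t / n)) ^ 2)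
  set q := (√(2 * π * sinh (2 * t / n)))⁻¹ with hq
  have hq0 : 0 ≤ q := by positivity
  calc _ ≤ q * G * 1 * exp (t / n * M) := by gcongr
    _ = _ := by ring

/-- **Proposition (iterated integrals).** If `c` is continuous and bounded on `[0,∞)×ℝ`
and `v₀` is continuous and vanishes at infinity, then `v_n^{(t)}(t,x)` is given by an
explicit `n`-fold integral. -/
theorem vApprox_eq_iterated_integral
    (v₀ : ℝ → ℝ) (hv₀c : Continuous v₀) (hv₀0 : Tendsto v₀ (cocompact ℝ) (𝓝 0))
    (c : ℝ → ℝ → ℝ)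
    (hc_cont : ContinuousOn (fun p : ℝ × ℝ => c p.1 p.2) (Set.Ici 0 ×ˢ Set.univ))
    (hc_bdd : ∃ M : ℝ, ∀ s ∈ Set.Ici (0:ℝ), ∀ x : ℝ, |c s x| ≤ M)
    (t : ℝ) (ht : 0 < t) (n : ℕ) (hn : 1 ≤ n) (x : ℝ) :
    vApprox v₀ c t n t x =
      ∫ σ : Fin n → ℝ,
        (2 * π * Real.sinh (2 * t / n)) ^ (-(n : ℝ) / 2) *
        v₀ (seqVal σ n + x / Real.cosh (2 * t / n) ^ n) *
        Real.exp (-(1 / 2) * (Real.cosh (2 * t / n) / Real.sinh (2 * t / n)) *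
          ∑ j ∈ Finset.Icc 1 n,
            (seqVal σ (n - j + 1) - seqVal σ (n - j) / Real.cosh (2 * t / n)) ^ 2) *
        Real.exp (-(1 / 2) * (Real.sinh (2 * t / n) / Real.cosh (2 * t / n)) *
          ∑ j ∈ Finset.Icc 1 n,
            (seqVal σ (n - j) + x / Real.cosh (2 * t / n) ^ (n - j)) ^ 2) *
        Real.exp (-(t / n) * ∑ j ∈ Finset.Icc 1 n,
          c (j * t / n) (seqVal σ (n - j) + x / Real.cosh (2 * t / n) ^ (n - j))) := by
  have hn0 : (0 : ℝ) < n := by exact_mod_cast hn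
  have hS : 0 < sinh (2 * t / n) := sinh_pos_iff.2 (by positivity)
  have hC : 0 < cosh (2 * t / n) := cosh_pos _
  obtain ⟨M, hM⟩ := hc_bdd
  obtain ⟨D, hD⟩ : ∃ D, ∀ y, |v₀ y| ≤ D :=
    (⟨⟨v₀, hv₀c⟩, hv₀0⟩ : ZeroAtInftyContinuousMap ℝ ℝ).isBounded_range.exists_norm_le.imp
      fun D h y => h _ (Set.mem_range_self y)
  have hg : Integrable fun y : ℝ => (√(2 * π * sinh (2 * t / n)))⁻¹ * exp (t / n * M) *
      exp (-(1 / 2 * (cosh (2 * t / n) / sinh (2 * t / n))) * y ^ 2) :=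
    (integrable_exp_neg_mul_sq (by positivity)).const_mul _
  rw [vApprox_final v₀ c ht hn, iterate_eq_integral_pathWeight
    (W := fun m => atNode v₀ c t n (2 * m)) (continuous_stepKernel hc_cont ht n) hv₀c hD hg
    (abs_stepKernel_le hM ht hn) rfl (atNode_step v₀ c ht hn) n x,
    ← integral_add_right_eq_self _ (fun i : Fin n => x / cosh (2 * t / n) ^ ((i : ℕ) + 1))]
  exact integral_congr_ae (.of_forall fun σ => pathWeight_translate v₀ c ht hn x σ)

end
end

section
/- Let v_0 be a C⁴ function on ℝ with bounded derivatives up to order 4 such that v_0(x) → 0 as |x| → ∞. Let c be continuous and bounded on [0,∞)×ℝ, C¹ on (0,∞)×ℝ, with space derivatives up to order 4 existing, continuous and bounded on (0,∞)×ℝ. Then the function v defined on (0,∞)×ℝ by v(t,x) = ∫_{C_W} v_0(√(2t) w(1) + x) · exp(−t ∫₀¹ (x + √(2t) w(s))² ds) · exp(−t ∫₀¹ c(t(1−s), √(2t) w(s) + x) ds) dm_W(w) is a solution of problem (pb). -/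
/-!
The Feynman–Kac integral is shown to solve Duhamel's equation, and solutions of Duhamel's
equation are shown to be classical by potential estimates for the heat semigroup.

Write `V(r,y) = y² + c(r,y)`, let `v(t,x)` be the Feynman–Kac integral, and let
`heat s g x = E[g(x + √(2s) Z)]`, `Z` standard normal, be the semigroup generated by `∂ₓ²`.

*Duhamel's formula* (`FK_duhamel`). The fundamental theorem of calculus gives, for each path,
`exp(-t ∫₀¹ q) = 1 - ∫₀¹ t q(σ) exp(-t ∫_σ¹ q) dσ` with `q(s) = V(t(1-s), x + √(2t) w(s))`.
Taking expectations, the Markov property at time `σ` (`markov_formula`) identifies the slice `σ`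
with `heat (tσ)` applied to `V v` at time `t - tσ`. Hence
`v(t,x) = heat t v₀ x - ∫₀ᵗ heat s ((V v)(t-s,·)) x ds`.
Since Wiener measure is given only through its finite-dimensional densities, the Markov property
is first obtained for finitely many times, from the factorization of the density at its first time
(`normalDensity_cons`, `map_evals_eq`). It passes to functionals of the whole path by
approximating `∫₀¹` with Riemann sums.

*Regularity* (`mild_solution_is_classical`). By the Cameron–Martin formula, the space derivative of
`heat s g` is the Gaussian average `heatGrad s g` of `g` against the weight `Z / √(2s)`. This needs
no regularity of `g` and costs only the integrable factor `s^(-1/2)`. Starting from a source `V v`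
that is merely continuous, Duhamel's formula therefore gives a continuous `∂ₓv`. Then the source
is `C¹` in space, and a second application gives `∂ₓₓv`. The time derivative comes from writing the
potential of a source `F` as `∫₀ᵗ F dr + ∫₀ᵗ ∂ₓ(potential of ∂ₓF) dτ` (`Source.heatPot_eq`).
Exponential growth bounds in space accommodate the unbounded factor `y²`.

The initial condition follows from the continuity of `v` up to time `0` (`continuous_FK`).
-/

open MeasureTheory Real Filter Topology

noncomputable section


/-- The classical Wiener space: continuous functions on `[0,1]` vanishing at `0`. -/
def CW : Type := {w : C(Set.Icc (0:ℝ) 1, ℝ) // w ⟨0, by norm_num⟩ = 0}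

instance : TopologicalSpace CW := by unfold CW; infer_instance
instance : MeasurableSpace CW := borel CW

/-- Evaluation of an element of the Wiener space at a time `s` (clamped to `[0,1]`). -/
def CW.eval (w : CW) (s : ℝ) : ℝ := w.1 (Set.projIcc (0:ℝ) 1 zero_le_one s)

/-- The value preceding index `i`, with the convention that it is `0` for `i = 0`. -/
def prevVal {n : ℕ} (v : Fin n → ℝ) (i : Fin n) : ℝ :=
  if h : (i : ℕ) = 0 then 0 else v ⟨(i : ℕ) - 1, by have := i.isLt; omega⟩

/-- The normal (Gaussian) density of the finite-dimensional distributions of Brownian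
motion at times `t 0 < t 1 < ⋯ < t (n-1)`. -/
def normalDensity {n : ℕ} (t : Fin n → ℝ) (ξ : Fin n → ℝ) : ℝ :=
  (Real.sqrt ((2 * π) ^ n * ∏ i, (t i - prevVal t i)))⁻¹ *
    Real.exp (-(1 / 2) * ∑ i, (ξ i - prevVal ξ i) ^ 2 / (t i - prevVal t i))

/-- `μ` is the Wiener measure: a probability measure on `CW` whose finite-dimensional
distributions at times `0 < t 0 < t 1 < ⋯ < t (n-1) ≤ 1` have the normal density. -/
structure IsWienerMeasure (μ : Measure CW) : Prop where
  prob : IsProbabilityMeasure μ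
  fdd : ∀ (n : ℕ) (t : Fin n → ℝ), StrictMono t → (∀ i, 0 < t i) → (∀ i, t i ≤ 1) →
    Measure.map (fun (w : CW) (i : Fin n) => w.eval (t i)) μ =
      MeasureTheory.volume.withDensity (fun ξ => ENNReal.ofReal (normalDensity t ξ))

/-- The Feynman–Kac type integral of the paper:
`S(v₀,c)(t,x) = ∫_{C_W} v₀(√(2t) w(1)+x) exp(−t∫₀¹ (x+√(2t)w(s))² ds)
  exp(−t∫₀¹ c(t(1−s), √(2t)w(s)+x) ds) dm_W(w)`. -/
def wienerFK (μ : Measure CW) (v₀ : ℝ → ℝ) (c : ℝ → ℝ → ℝ) (t x : ℝ) : ℝ :=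
  ∫ w : CW,
    v₀ (Real.sqrt (2 * t) * w.eval 1 + x) *
      Real.exp (-(t * ∫ s in (0:ℝ)..1, (x + Real.sqrt (2 * t) * w.eval s) ^ 2)) *
      Real.exp (-(t * ∫ s in (0:ℝ)..1,
        c (t * (1 - s)) (Real.sqrt (2 * t) * w.eval s + x))) ∂μ

/-! ### The heat semigroup and its space derivative -/

/-- The standard normal law on `ℝ`. -/
abbrev stdG : Measure ℝ := ProbabilityTheory.gaussianReal 0 1

/-- The heat semigroup of `∂ₓ²`: `heat s g x = E[g(x + √(2s) Z)]` with `Z` standard normal. -/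
def heat (s : ℝ) (g : ℝ → ℝ) (x : ℝ) : ℝ := ∫ z, g (x + √(2 * s) * z) ∂stdG

/-- The space derivative of the heat semigroup, with the derivative moved to the Gaussian
weight: `heatGrad s g x = E[g(x + √(2s) Z) Z] / √(2s)`. For `s ≤ 0` this is `0`, because
`√(2s) = 0` and `0⁻¹ = 0`. -/
def heatGrad (s : ℝ) (g : ℝ → ℝ) (x : ℝ) : ℝ :=
  (√(2 * s))⁻¹ * ∫ z, g (x + √(2 * s) * z) * z ∂stdG

/-- The exponential moment `E[exp(k|Z|)]` of a standard normal variable. -/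
def expMoment (k : ℝ) : ℝ := ∫ z, exp (k * |z|) ∂stdG

lemma integrable_exp_abs (k : ℝ) : Integrable (fun z => exp (k * |z|)) stdG := by
  refine Integrable.mono' ((ProbabilityTheory.integrable_exp_mul_gaussianReal k).add
    (ProbabilityTheory.integrable_exp_mul_gaussianReal (-k))) (by fun_prop) ?_
  refine Eventually.of_forall fun z => ?_
  rw [norm_eq_abs, abs_exp]
  simp only [Pi.add_apply]
  rcases abs_cases z with ⟨h, _⟩ | ⟨h, _⟩ <;> rw [h]
  · linarith [exp_pos (-k * z)]
  · rw [mul_neg, ← neg_mul]; linarith [exp_pos (k * z)]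

lemma expMoment_nonneg (k : ℝ) : 0 ≤ expMoment k := integral_nonneg fun _ => (exp_pos _).le

lemma abs_le_exp_abs (z : ℝ) : |z| ≤ exp |z| := by linarith [add_one_le_exp |z|]

/-- The growth bound `K exp(k|y|)` shifted along `x + a z`, with the dependence on `z` made uniform
in the scale `a ≤ b`. -/
lemma growth_shift {g : ℝ → ℝ} {K k : ℝ} (hk : 0 ≤ k) (hK : 0 ≤ K)
    (hg : ∀ y, |g y| ≤ K * exp (k * |y|)) {a b : ℝ} (ha : 0 ≤ a) (hab : a ≤ b) (x z : ℝ) :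
    |g (x + a * z)| ≤ K * exp (k * |x|) * exp (k * b * |z|) := by
  refine (hg _).trans ?_
  rw [mul_assoc, ← exp_add]
  gcongr
  have h1 : |x + a * z| ≤ |x| + b * |z| := by
    refine (abs_add_le _ _).trans ?_
    rw [abs_mul, abs_of_nonneg ha]
    gcongr
  nlinarith

lemma growth_shift_mul {g : ℝ → ℝ} {K k : ℝ} (hk : 0 ≤ k) (hK : 0 ≤ K)
    (hg : ∀ y, |g y| ≤ K * exp (k * |y|)) {a b : ℝ} (ha : 0 ≤ a) (hab : a ≤ b) (x z : ℝ) :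
    |g (x + a * z) * z| ≤ K * exp (k * |x|) * exp ((k * b + 1) * |z|) := by
  rw [abs_mul, add_mul, exp_add, ← mul_assoc, one_mul]
  exact mul_le_mul (growth_shift hk hK hg ha hab x z) (abs_le_exp_abs z) (abs_nonneg _)
    (by positivity)

lemma sqrt_two_mul_le {s T : ℝ} (h : s ≤ T) : √(2 * s) ≤ √(2 * T) :=
  Real.sqrt_le_sqrt (by linarith)

lemma abs_heat_le {g : ℝ → ℝ} {K k : ℝ} (hk : 0 ≤ k) (hK : 0 ≤ K)
    (hg : ∀ y, |g y| ≤ K * exp (k * |y|)) {s T : ℝ} (hs : s ≤ T) (x : ℝ) :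
    |heat s g x| ≤ K * exp (k * |x|) * expMoment (k * √(2 * T)) := by
  rw [heat, expMoment, ← integral_const_mul, ← norm_eq_abs]
  refine norm_integral_le_of_norm_le ((integrable_exp_abs _).const_mul _)
    (Eventually.of_forall fun z => ?_)
  exact growth_shift hk hK hg (Real.sqrt_nonneg _) (sqrt_two_mul_le hs) x z

lemma abs_heatGrad_le {g : ℝ → ℝ} {K k : ℝ} (hk : 0 ≤ k) (hK : 0 ≤ K)
    (hg : ∀ y, |g y| ≤ K * exp (k * |y|)) {s T : ℝ} (hs : s ≤ T) (x : ℝ) :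
    |heatGrad s g x| ≤ (√(2 * s))⁻¹ * (K * exp (k * |x|) * expMoment (k * √(2 * T) + 1)) := by
  rw [heatGrad, abs_mul, abs_of_nonneg (a := (√(2 * s))⁻¹) (by positivity)]
  refine mul_le_mul_of_nonneg_left ?_ (by positivity)
  rw [expMoment, ← integral_const_mul, ← norm_eq_abs]
  refine norm_integral_le_of_norm_le ((integrable_exp_abs _).const_mul _)
    (Eventually.of_forall fun z => ?_)
  exact growth_shift_mul hk hK hg (Real.sqrt_nonneg _) (sqrt_two_mul_le hs) x z

/-- The Cameron–Martin formula for the one-dimensional standard normal law. -/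
lemma integral_shift_stdG (G : ℝ → ℝ) (h : ℝ) :
    ∫ z, G (z + h) ∂stdG = ∫ z, G z * exp (h * z - h ^ 2 / 2) ∂stdG := by
  rw [ProbabilityTheory.integral_gaussianReal_eq_integral_smul one_ne_zero,
    ProbabilityTheory.integral_gaussianReal_eq_integral_smul one_ne_zero,
    ← integral_add_right_eq_self (μ := volume) _ (-h)]
  refine integral_congr_ae (Eventually.of_forall fun z => ?_)
  simp only [ProbabilityTheory.gaussianPDFReal, smul_eq_mul, neg_add_cancel_right, NNReal.coe_one]
  rw [mul_comm (G z), ← mul_assoc, mul_assoc _ (exp _) (exp _), ← exp_add]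
  congr 3
  ring

/-- Differentiating the semigroup in space needs no regularity of `g`: by Cameron–Martin the
space variable is moved into the Gaussian weight. -/
lemma hasDerivAt_heat {g : ℝ → ℝ} {K k : ℝ} (hk : 0 ≤ k) (hK : 0 ≤ K) (hgm : Measurable g)
    (hg : ∀ y, |g y| ≤ K * exp (k * |y|)) {s : ℝ} (hs : 0 < s) (x : ℝ) :
    HasDerivAt (heat s g) (heatGrad s g x) x := by
  have ha : 0 < √(2 * s) := by positivity
  set a := √(2 * s) with ha_def
  have hmain : HasDerivAt (fun h : ℝ => ∫ z, g (x + a * z) * exp (h * z - h ^ 2 / 2) ∂stdG)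
      (∫ z, g (x + a * z) * (exp (0 * z - 0 ^ 2 / 2) * (z - 0)) ∂stdG) 0 := by
    refine (hasDerivAt_integral_of_dominated_loc_of_deriv_le (μ := stdG) (s := Metric.ball 0 1)
      (F := fun h z => g (x + a * z) * exp (h * z - h ^ 2 / 2))
      (F' := fun h z => g (x + a * z) * (exp (h * z - h ^ 2 / 2) * (z - h)))
      (bound := fun z => K * exp (k * |x|) * exp (1) * exp ((k * a + 2) * |z|))
      (Metric.ball_mem_nhds _ one_pos) (Eventually.of_forall fun h => ?_) ?_ ?_ ?_ ?_ ?_).2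
    · exact (by fun_prop : Measurable _).aestronglyMeasurable
    · refine Integrable.mono' ((integrable_exp_abs (k * a)).const_mul (K * exp (k * |x|)))
        (by fun_prop) (Eventually.of_forall fun z => ?_)
      simpa using growth_shift hk hK hg ha.le le_rfl x z
    · exact (by fun_prop : Measurable _).aestronglyMeasurable
    · refine Eventually.of_forall fun z h hh => ?_
      have hh1 : |h| ≤ 1 := by simpa using (Metric.mem_ball.1 hh).le
      rw [norm_eq_abs, abs_mul, abs_mul, abs_exp]
      have e1 : exp (h * z - h ^ 2 / 2) ≤ exp |z| := by
        apply exp_le_exp.2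
        have : h * z ≤ |z| := (le_abs_self _).trans (by
          rw [abs_mul]; exact mul_le_of_le_one_left (abs_nonneg _) hh1)
        nlinarith [sq_nonneg h]
      have e2 : |z - h| ≤ exp 1 * exp |z| := by
        have : |z - h| ≤ |z| + 1 := (abs_sub _ _).trans (by linarith)
        rw [← exp_add]
        linarith [add_one_le_exp (1 + |z|)]
      calc _ ≤ (K * exp (k * |x|) * exp (k * a * |z|)) * (exp |z| * (exp 1 * exp |z|)) := by
            refine mul_le_mul (growth_shift hk hK hg ha.le le_rfl x z) ?_ (by positivity)
              (by positivity)
            exact mul_le_mul e1 e2 (abs_nonneg _) (by positivity)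
        _ = K * exp (k * |x|) * exp 1 * (exp (k * a * |z|) * exp |z| * exp |z|) := by ring
        _ = _ := by rw [← exp_add, ← exp_add]; ring_nf
    · exact (integrable_exp_abs _).const_mul _
    · refine Eventually.of_forall fun z h _ => ?_
      have : HasDerivAt (fun h : ℝ => h * z - h ^ 2 / 2) (z - h) h := by
        have := ((hasDerivAt_id h).mul_const z).sub (((hasDerivAt_id h).pow 2).div_const 2)
        refine this.congr_deriv ?_
        simp only [id, one_mul, mul_one, Nat.cast_ofNat, Nat.add_one_sub_one, pow_one]
        ring
      exact this.exp.const_mul _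
  have hcomp : HasDerivAt (fun x' : ℝ => a⁻¹ * (x' - x)) a⁻¹ x := by
    simpa using ((hasDerivAt_id x).sub_const x).const_mul a⁻¹
  have h0 : a⁻¹ * (x - x) = 0 := by simp
  have := HasDerivAt.comp x (h₂ := fun h : ℝ => ∫ z, g (x + a * z) * exp (h * z - h ^ 2 / 2) ∂stdG)
    (h := fun x' : ℝ => a⁻¹ * (x' - x)) (by rw [h0]; exact hmain) hcomp
  refine (this.congr_of_eventuallyEq (Eventually.of_forall fun x' => ?_)).congr_deriv ?_
  · simp only [Function.comp, heat]
    rw [← integral_shift_stdG (fun z => g (x + a * z))]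
    refine integral_congr_ae (Eventually.of_forall fun z => ?_)
    simp only
    congr 1
    field_simp
    ring
  · rw [heatGrad, ← ha_def, mul_comm]
    simp

/-- A differentiable `g` can be differentiated under the Gaussian expectation in space. -/
lemma hasDerivAt_heat' {g g' : ℝ → ℝ} {K k : ℝ} (hk : 0 ≤ k) (hK : 0 ≤ K) (hgm : Measurable g)
    (hg : ∀ y, |g y| ≤ K * exp (k * |y|)) (hgm' : Measurable g')
    (hg' : ∀ y, |g' y| ≤ K * exp (k * |y|)) (hd : ∀ y, HasDerivAt g (g' y) y) (s x : ℝ) :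
    HasDerivAt (heat s g) (heat s g' x) x := by
  refine (hasDerivAt_integral_of_dominated_loc_of_deriv_le (μ := stdG) (s := Metric.ball x 1)
      (F := fun h z => g (h + √(2 * s) * z)) (F' := fun h z => g' (h + √(2 * s) * z))
      (bound := fun z => K * exp (k * (|x| + 1)) * exp (k * √(2 * s) * |z|))
      (Metric.ball_mem_nhds _ one_pos) (Eventually.of_forall fun h => ?_) ?_ ?_ ?_ ?_ ?_).2
  · exact (by fun_prop : Measurable _).aestronglyMeasurable
  · exact Integrable.mono' ((integrable_exp_abs (k * √(2 * s))).const_mul (K * exp (k * |x|)))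
      (by fun_prop : Measurable _).aestronglyMeasurable (Eventually.of_forall fun z =>
        growth_shift hk hK hg (Real.sqrt_nonneg _) le_rfl x z)
  · exact (by fun_prop : Measurable _).aestronglyMeasurable
  · refine Eventually.of_forall fun z h hh => ?_
    refine (growth_shift hk hK hg' (Real.sqrt_nonneg _) le_rfl h z).trans ?_
    have : |h| ≤ |x| + 1 := by
      have h1 := (Metric.mem_ball.1 hh).le
      rw [Real.dist_eq] at h1
      have := abs_add_le (h - x) x
      simp at this; linarith
    gcongr
  · exact (integrable_exp_abs _).const_mul _
  · exact Eventually.of_forall fun z h _ => by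
      simpa using (hd (h + √(2 * s) * z)).comp_add_const h (√(2 * s) * z)

lemma heatGrad_eq_heat {g g' : ℝ → ℝ} {K k : ℝ} (hk : 0 ≤ k) (hK : 0 ≤ K) (hgm : Measurable g)
    (hg : ∀ y, |g y| ≤ K * exp (k * |y|)) (hgm' : Measurable g')
    (hg' : ∀ y, |g' y| ≤ K * exp (k * |y|)) (hd : ∀ y, HasDerivAt g (g' y) y)
    {s : ℝ} (hs : 0 < s) (x : ℝ) : heatGrad s g x = heat s g' x :=
  (hasDerivAt_heat hk hK hgm hg hs x).unique (hasDerivAt_heat' hk hK hgm hg hgm' hg' hd s x)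

/-- The heat equation for the semigroup, in the form `∂ₛ heat s g = ∂ₓ heat s g'`. -/
lemma hasDerivAt_heat_time {g g' : ℝ → ℝ} {K k : ℝ} (hk : 0 ≤ k) (hK : 0 ≤ K)
    (hgm : Measurable g)
    (hg : ∀ y, |g y| ≤ K * exp (k * |y|)) (hgm' : Measurable g')
    (hg' : ∀ y, |g' y| ≤ K * exp (k * |y|)) (hd : ∀ y, HasDerivAt g (g' y) y)
    {s : ℝ} (hs : 0 < s) (x : ℝ) :
    HasDerivAt (fun σ => heat σ g x) (heatGrad s g' x) s := by
  have hsq : 0 < √(2 * s) := by positivity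
  -- differentiate first with respect to the scale `a = √(2s)`
  have hmain : HasDerivAt (fun a : ℝ => ∫ z, g (x + a * z) ∂stdG)
      (∫ z, g' (x + √(2 * s) * z) * z ∂stdG) (√(2 * s)) := by
    refine (hasDerivAt_integral_of_dominated_loc_of_deriv_le (μ := stdG)
      (s := Set.Ioo 0 (√(2 * s) + 1))
      (F := fun a z => g (x + a * z)) (F' := fun a z => g' (x + a * z) * z)
      (bound := fun z => K * exp (k * |x|) * exp ((k * (√(2 * s) + 1) + 1) * |z|))
      (Ioo_mem_nhds hsq (by linarith)) (Eventually.of_forall fun h => ?_) ?_ ?_ ?_ ?_ ?_).2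
    · exact (by fun_prop : Measurable _).aestronglyMeasurable
    · exact Integrable.mono' ((integrable_exp_abs (k * √(2 * s))).const_mul (K * exp (k * |x|)))
        (by fun_prop : Measurable _).aestronglyMeasurable (Eventually.of_forall fun z =>
          growth_shift hk hK hg (Real.sqrt_nonneg _) le_rfl x z)
    · exact (by fun_prop : Measurable _).aestronglyMeasurable
    · exact Eventually.of_forall fun z a ha =>
        growth_shift_mul hk hK hg' ha.1.le ha.2.le x z
    · exact (integrable_exp_abs _).const_mul _
    · refine Eventually.of_forall fun z a _ => ?_
      have h1 : HasDerivAt (fun a : ℝ => x + a * z) z a := by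
        simpa using ((hasDerivAt_id a).mul_const z).const_add x
      exact (hd (x + a * z)).comp a h1
  have h2 : HasDerivAt (fun σ : ℝ => √(2 * σ)) ((√(2 * s))⁻¹) s := by
    have := ((hasDerivAt_id s).const_mul 2).sqrt (by simpa using hs.ne')
    refine this.congr_deriv ?_
    simp only [id, mul_one]
    field_simp
  refine (hmain.comp s h2).congr_deriv ?_
  rw [heatGrad, mul_comm]

/-- Joint continuity of the Gaussian averages `E[G p (X p + √(2 S p) Z) φ(Z)]` along a jointly
continuous family `G`. The weights `φ = 1` and `φ(z) = z` give `heat` and `heatGrad`. -/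
lemma continuousAt_heat_family {α : Type*} [TopologicalSpace α] [FirstCountableTopology α]
    {G : α → ℝ → ℝ} {S X : α → ℝ} {p₀ : α} {K k B : ℝ} (hk : 0 ≤ k) (hK : 0 ≤ K)
    (hS : ContinuousAt S p₀) (hX : ContinuousAt X p₀)
    (hG : ∀ y, ContinuousAt (fun q : α × ℝ => G q.1 q.2) (p₀, y))
    (hm : ∀ᶠ p in 𝓝 p₀, Measurable (G p))
    (hb : ∀ᶠ p in 𝓝 p₀, ∀ y, |G p y| ≤ K * exp (k * |y|))
    {φ : ℝ → ℝ} (hφ : Continuous φ) (hφb : ∀ z, |φ z| ≤ exp (B * |z|)) :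
    ContinuousAt (fun p => ∫ z, G p (X p + √(2 * S p) * z) * φ z ∂stdG) p₀ := by
  have hT : ∀ᶠ p in 𝓝 p₀, √(2 * S p) < √(2 * S p₀) + 1 :=
    (ContinuousAt.sqrt (hS.const_mul 2)).eventually_lt continuousAt_const (by linarith)
  have hX' : ∀ᶠ p in 𝓝 p₀, |X p| < |X p₀| + 1 :=
    hX.abs.eventually_lt continuousAt_const (by linarith)
  refine continuousAt_of_dominated (bound := fun z => K * exp (k * (|X p₀| + 1)) *
    exp ((k * (√(2 * S p₀) + 1) + B) * |z|)) ?_ ?_ ((integrable_exp_abs _).const_mul _) ?_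
  · filter_upwards [hm] with p hp
    exact (by fun_prop : Measurable _).aestronglyMeasurable
  · filter_upwards [hb, hT, hX'] with p hp hpT hpX
    refine Eventually.of_forall fun z => ?_
    rw [norm_eq_abs, abs_mul, add_mul, exp_add, ← mul_assoc]
    refine mul_le_mul ((growth_shift hk hK hp (Real.sqrt_nonneg _) hpT.le _ z).trans ?_) (hφb z)
      (abs_nonneg _) (by positivity)
    gcongr
  · refine Eventually.of_forall fun z => ContinuousAt.mul ?_ continuousAt_const
    have h1 : ContinuousAt (fun p => (p, X p + √(2 * S p) * z)) p₀ :=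
      continuousAt_id.prodMk (hX.add ((ContinuousAt.sqrt (hS.const_mul 2)).mul_const z))
    exact ContinuousAt.comp (x := p₀) (f := fun p => (p, X p + √(2 * S p) * z))
      (g := fun q : α × ℝ => G q.1 q.2) (hG _) h1

lemma continuousAt_heat_joint {α : Type*} [TopologicalSpace α] [FirstCountableTopology α]
    {G : α → ℝ → ℝ} {S X : α → ℝ} {p₀ : α} {K k : ℝ} (hk : 0 ≤ k) (hK : 0 ≤ K)
    (hS : ContinuousAt S p₀) (hX : ContinuousAt X p₀)
    (hG : ∀ y, ContinuousAt (fun q : α × ℝ => G q.1 q.2) (p₀, y))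
    (hm : ∀ᶠ p in 𝓝 p₀, Measurable (G p))
    (hb : ∀ᶠ p in 𝓝 p₀, ∀ y, |G p y| ≤ K * exp (k * |y|)) :
    ContinuousAt (fun p => heat (S p) (G p) (X p)) p₀ := by
  simpa [heat] using continuousAt_heat_family (B := 0) hk hK hS hX hG hm hb
    (φ := fun _ => 1) continuous_const (by simp)

/-- Joint continuity of `heatGrad` along a family of functions, at positive times. -/
lemma continuousAt_heatGrad_joint {α : Type*} [TopologicalSpace α] [FirstCountableTopology α]
    {G : α → ℝ → ℝ} {S X : α → ℝ} {p₀ : α} {K k : ℝ} (hk : 0 ≤ k) (hK : 0 ≤ K)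
    (hS : ContinuousAt S p₀) (hX : ContinuousAt X p₀) (hpos : 0 < S p₀)
    (hG : ∀ y, ContinuousAt (fun q : α × ℝ => G q.1 q.2) (p₀, y))
    (hm : ∀ᶠ p in 𝓝 p₀, Measurable (G p))
    (hb : ∀ᶠ p in 𝓝 p₀, ∀ y, |G p y| ≤ K * exp (k * |y|)) :
    ContinuousAt (fun p => heatGrad (S p) (G p) (X p)) p₀ := by
  refine ContinuousAt.mul (ContinuousAt.inv₀ (ContinuousAt.sqrt (hS.const_mul 2))
    (by positivity)) ?_
  exact continuousAt_heat_family (B := 1) hk hK hS hX hG hm hb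
    (φ := fun z => z) continuous_id (by simpa using abs_le_exp_abs)

lemma measurable_heat_family {α : Type*} [MeasurableSpace α] {G : α → ℝ → ℝ} {S : α → ℝ}
    (hG : Measurable (Function.uncurry G)) (hS : Measurable S) (x : ℝ) :
    Measurable (fun p => heat (S p) (G p) x) := by
  have : StronglyMeasurable (fun q : α × ℝ => G q.1 (x + √(2 * S q.1) * q.2)) := by
    refine (hG.comp (g := Function.uncurry G) (f := fun q : α × ℝ => (q.1, x + √(2 * S q.1) * q.2))
      ?_).stronglyMeasurable
    fun_prop
  exact (this.integral_prod_right (ν := stdG)).measurable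

lemma measurable_heatGrad_family {α : Type*} [MeasurableSpace α] {G : α → ℝ → ℝ} {S : α → ℝ}
    (hG : Measurable (Function.uncurry G)) (hS : Measurable S) (x : ℝ) :
    Measurable (fun p => heatGrad (S p) (G p) x) := by
  have : StronglyMeasurable (fun q : α × ℝ => G q.1 (x + √(2 * S q.1) * q.2) * q.2) := by
    refine ((hG.comp (g := Function.uncurry G)
      (f := fun q : α × ℝ => (q.1, x + √(2 * S q.1) * q.2)) ?_).mul
        measurable_snd).stronglyMeasurable
    fun_prop
  exact Measurable.mul (by fun_prop) (this.integral_prod_right (ν := stdG)).measurable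

lemma heat_zero (g : ℝ → ℝ) (x : ℝ) : heat 0 g x = g x := by simp [heat]

/-- The semigroup started from a `C¹` function, written as the integral of its time
derivative. -/
lemma integral_heatGrad {g g' : ℝ → ℝ} {K k : ℝ} (hk : 0 ≤ k) (hK : 0 ≤ K)
    (hgm : Measurable g)
    (hg : ∀ y, |g y| ≤ K * exp (k * |y|)) (hgm' : Measurable g')
    (hg' : ∀ y, |g' y| ≤ K * exp (k * |y|)) (hd : ∀ y, HasDerivAt g (g' y) y)
    {t : ℝ} (ht : 0 ≤ t) (x : ℝ)
    (hint : IntervalIntegrable (fun s => heatGrad s g' x) volume 0 t) :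
    ∫ s in (0:ℝ)..t, heatGrad s g' x = heat t g x - g x := by
  rw [intervalIntegral.integral_eq_sub_of_hasDerivAt_of_le ht (f := fun σ => heat σ g x) ?_ ?_ hint,
    heat_zero]
  · have hgc : Continuous g := continuous_iff_continuousAt.2 fun y => (hd y).continuousAt
    refine Continuous.continuousOn (continuous_iff_continuousAt.2 fun s => ?_)
    exact continuousAt_heat_joint (G := fun _ => g) (S := fun s => s) (X := fun _ => x) hk hK
      continuousAt_id continuousAt_const (fun y => (hgc.comp continuous_snd).continuousAt)
      (Eventually.of_forall fun _ => hgm) (Eventually.of_forall fun _ => hg)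
  · intro s hs
    exact hasDerivAt_heat_time hk hK hgm hg hgm' hg' hd hs.1 x

/-! ### Heat potentials of continuous sources -/

/-- The heat potential (Duhamel integral) of a time-dependent source `f`. -/
def heatPot (f : ℝ → ℝ → ℝ) (t x : ℝ) : ℝ := ∫ s in (0:ℝ)..t, heat s (f (t - s)) x

/-- The space derivative of the heat potential of `f`, as an integral whose integrand is
`O(s^(-1/2))` at `s = 0`. -/
def heatPotGrad (f : ℝ → ℝ → ℝ) (t x : ℝ) : ℝ := ∫ s in (0:ℝ)..t, heatGrad s (f (t - s)) x

/-- An admissible source: measurable, jointly continuous at positive times, and bounded by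
`K exp(k|y|)` for times in `(0,T]`. Nothing but measurability is asked for at times `r ≤ 0`. -/
structure Source (T K k : ℝ) (f : ℝ → ℝ → ℝ) : Prop where
  meas : Measurable (Function.uncurry f)
  bound : ∀ r, 0 < r → r ≤ T → ∀ y, |f r y| ≤ K * exp (k * |y|)
  cont : ∀ r, 0 < r → ∀ y, ContinuousAt (Function.uncurry f) (r, y)

lemma intervalIntegrable_inv_sqrt (t : ℝ) :
    IntervalIntegrable (fun s : ℝ => (√(2 * s))⁻¹) volume 0 t := by
  have h := (intervalIntegral.intervalIntegrable_rpow' (a := 0) (b := t)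
    (by norm_num : (-1:ℝ) < -(1/2))).const_mul ((√2)⁻¹)
  rcases le_total 0 t with ht | ht
  · refine h.congr ?_
    rw [Set.uIoc_of_le ht]
    intro s hs
    simp only
    rw [Real.sqrt_mul (by norm_num), mul_inv, Real.rpow_neg hs.1.le, ← Real.sqrt_eq_rpow]
  · refine (intervalIntegrable_const (c := (0:ℝ))).congr ?_
    rw [Set.uIoc_of_ge ht]
    intro s hs
    simp only
    rw [Real.sqrt_eq_zero_of_nonpos (by linarith [hs.2]), inv_zero]

lemma integrableOn_inv_sqrt {T : ℝ} (hT : 0 ≤ T) :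
    IntegrableOn (fun s : ℝ => (√(2 * s))⁻¹) (Set.Ioc 0 T) :=
  (intervalIntegrable_iff_integrableOn_Ioc_of_le hT).1 (intervalIntegrable_inv_sqrt T)

section
variable {T K k : ℝ} {f : ℝ → ℝ → ℝ}

lemma Source.meas_slice (hf : Source T K k f) (r : ℝ) : Measurable (f r) :=
  hf.meas.comp (measurable_const.prodMk measurable_id)

lemma Source.cont_slice (hf : Source T K k f) {r : ℝ} (hr : 0 < r) : Continuous (f r) :=
  continuous_iff_continuousAt.2 fun y =>
    ContinuousAt.comp (g := Function.uncurry f) (f := fun y => (r, y)) (hf.cont r hr y)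
      (by fun_prop)

lemma Source.heatGrad_le (hf : Source T K k f) (hk : 0 ≤ k) (hK : 0 ≤ K) {s r : ℝ}
    (hs : s ≤ T) (hr : 0 < r) (hr' : r ≤ T) (x : ℝ) :
    ‖heatGrad s (f r) x‖ ≤
      (√(2 * s))⁻¹ * (K * exp (k * |x|) * expMoment (k * √(2 * T) + 1)) := by
  rw [norm_eq_abs]
  exact abs_heatGrad_le hk hK (hf.bound r hr hr') hs x

lemma Source.measurable_heatGrad (hf : Source T K k f) (t x : ℝ) :
    Measurable (fun s => heatGrad s (f (t - s)) x) :=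
  measurable_heatGrad_family (G := fun s => f (t - s)) (S := fun s => s)
    (hf.meas.comp (f := fun q : ℝ × ℝ => (t - q.1, q.2)) (by fun_prop)) measurable_id x

lemma Source.measurable_heat (hf : Source T K k f) (t x : ℝ) :
    Measurable (fun s => heat s (f (t - s)) x) :=
  measurable_heat_family (G := fun s => f (t - s)) (S := fun s => s)
    (hf.meas.comp (f := fun q : ℝ × ℝ => (t - q.1, q.2)) (by fun_prop)) measurable_id x

/-- Discarding the null set `{t}` from `(0,t]`, where the source would be taken at time `0`. -/
lemma ae_lt_of_uIoc {t : ℝ} (ht : 0 ≤ t) :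
    ∀ᵐ s : ℝ, s ∈ Set.uIoc 0 t → 0 < s ∧ s < t := by
  rw [Set.uIoc_of_le ht]
  filter_upwards [Measure.ae_ne volume t] with s hs hs'
  exact ⟨hs'.1, lt_of_le_of_ne hs'.2 hs⟩

lemma Source.intervalIntegrable_heat (hf : Source T K k f) (hk : 0 ≤ k) (hK : 0 ≤ K) {t : ℝ}
    (ht : 0 < t) (htT : t ≤ T) (x : ℝ) :
    IntervalIntegrable (fun s => heat s (f (t - s)) x) volume 0 t := by
  refine (intervalIntegrable_const
    (c := K * exp (k * |x|) * expMoment (k * √(2 * T)))).mono_fun'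
      (hf.measurable_heat t x).aestronglyMeasurable ?_
  rw [EventuallyLE, ae_restrict_iff' measurableSet_uIoc]
  filter_upwards [ae_lt_of_uIoc ht.le] with s hs hs'
  obtain ⟨h1, h2⟩ := hs hs'
  exact abs_heat_le hk hK (hf.bound _ (by linarith) (by linarith)) (by linarith) x

/-- The heat potential is differentiable in space without any regularity of the source, because
the kernel of `heatGrad` is of order `s^(-1/2)`, hence integrable. -/
lemma Source.hasDerivAt_heatPot (hf : Source T K k f) (hk : 0 ≤ k) (hK : 0 ≤ K) {t : ℝ}
    (ht : 0 < t) (htT : t ≤ T) (x : ℝ) :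
    HasDerivAt (heatPot f t) (heatPotGrad f t x) x := by
  refine (intervalIntegral.hasDerivAt_integral_of_dominated_loc_of_deriv_le
    (F := fun y s => heat s (f (t - s)) y) (F' := fun y s => heatGrad s (f (t - s)) y)
    (bound := fun s => (√(2 * s))⁻¹ *
      (K * exp (k * (|x| + 1)) * expMoment (k * √(2 * T) + 1)))
    (Metric.ball_mem_nhds x one_pos)
    (Eventually.of_forall fun y => (hf.measurable_heat t y).aestronglyMeasurable)
    (hf.intervalIntegrable_heat hk hK ht htT x)
    (hf.measurable_heatGrad t x).aestronglyMeasurable ?_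
    ((intervalIntegrable_inv_sqrt t).mul_const _) ?_).2
  · filter_upwards [ae_lt_of_uIoc ht.le] with s hs hs' y hy
    obtain ⟨h1, h2⟩ := hs hs'
    refine (hf.heatGrad_le hk hK (by linarith) (by linarith) (by linarith) y).trans ?_
    have : |y| ≤ |x| + 1 := by
      have h1 := (Metric.mem_ball.1 hy).le
      rw [Real.dist_eq] at h1
      have := abs_add_le (y - x) x
      simp at this; linarith
    have := expMoment_nonneg (k * √(2 * T) + 1)
    gcongr
  · filter_upwards [ae_lt_of_uIoc ht.le] with s hs hs' y _
    obtain ⟨h1, h2⟩ := hs hs'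
    exact _root_.hasDerivAt_heat hk hK (hf.meas_slice _) (hf.bound _ (by linarith) (by linarith))
      h1 y

lemma Source.abs_heatPotGrad_le (hf : Source T K k f) (hk : 0 ≤ k) (hK : 0 ≤ K) {t : ℝ}
    (ht : 0 < t) (htT : t ≤ T) (x : ℝ) :
    |heatPotGrad f t x| ≤ (K * expMoment (k * √(2 * T) + 1) *
      ∫ s in Set.Ioc 0 T, (√(2 * s))⁻¹) * exp (k * |x|) := by
  have hE := expMoment_nonneg (k * √(2 * T) + 1)
  rw [heatPotGrad, intervalIntegral.integral_of_le ht.le, ← norm_eq_abs]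
  have hint := (integrableOn_inv_sqrt (ht.le.trans htT))
  calc _ ≤ ∫ s in Set.Ioc 0 t, (√(2 * s))⁻¹ *
        (K * exp (k * |x|) * expMoment (k * √(2 * T) + 1)) := by
        refine norm_integral_le_of_norm_le ((integrableOn_inv_sqrt ht.le).mul_const _) ?_
        rw [ae_restrict_iff' measurableSet_Ioc]
        filter_upwards [ae_lt_of_uIoc ht.le] with s hs hs'
        rw [Set.uIoc_of_le ht.le] at hs
        obtain ⟨h1, h2⟩ := hs hs'
        exact hf.heatGrad_le hk hK (by linarith) (by linarith) (by linarith) x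
    _ ≤ ∫ s in Set.Ioc 0 T, (√(2 * s))⁻¹ *
        (K * exp (k * |x|) * expMoment (k * √(2 * T) + 1)) := by
        refine setIntegral_mono_set (hint.mul_const _)
          (Eventually.of_forall fun s => by positivity)
          (Set.Ioc_subset_Ioc_right htT).eventuallyLE
    _ = _ := by rw [integral_mul_const]; ring

/-- Joint continuity of `heatPotGrad`, by dominated convergence with the majorant `C s^(-1/2)`. -/
lemma Source.continuousAt_heatPotGrad (hf : Source T K k f) (hk : 0 ≤ k) (hK : 0 ≤ K)
    {t : ℝ} (ht : 0 < t) (htT : t < T) (x : ℝ) :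
    ContinuousAt (fun p : ℝ × ℝ => heatPotGrad f p.1 p.2) (t, x) := by
  -- with an indicator the domain of integration no longer depends on the time
  have heq : (fun p : ℝ × ℝ => ∫ s in Set.Ioc 0 T,
      (Set.Iio p.1).indicator (fun s => heatGrad s (f (p.1 - s)) p.2) s) =ᶠ[𝓝 (t, x)]
      fun p : ℝ × ℝ => heatPotGrad f p.1 p.2 := by
    have h1 : ∀ᶠ p : ℝ × ℝ in 𝓝 (t, x), 0 < p.1 :=
      continuousAt_const.eventually_lt continuousAt_fst ht
    have h2 : ∀ᶠ p : ℝ × ℝ in 𝓝 (t, x), p.1 < T :=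
      continuousAt_fst.eventually_lt continuousAt_const htT
    filter_upwards [h1, h2] with p hp1 hp2
    rw [setIntegral_indicator measurableSet_Iio, heatPotGrad,
      intervalIntegral.integral_of_le hp1.le, integral_Ioc_eq_integral_Ioo]
    congr 2
    ext s
    simp only [Set.mem_inter_iff, Set.mem_Ioc, Set.mem_Iio, Set.mem_Ioo]
    constructor
    · rintro ⟨⟨a, _⟩, b⟩; exact ⟨a, b⟩
    · rintro ⟨a, b⟩; exact ⟨⟨a, by linarith⟩, b⟩
  refine ContinuousAt.congr ?_ heq
  have hE := expMoment_nonneg (k * √(2 * T) + 1)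
  refine continuousAt_of_dominated (bound := fun s => (√(2 * s))⁻¹ *
      (K * exp (k * (|x| + 1)) * expMoment (k * √(2 * T) + 1))) ?_ ?_
      ((integrableOn_inv_sqrt (ht.le.trans htT.le)).mul_const _) ?_
  · refine Eventually.of_forall fun p => ?_
    exact ((hf.measurable_heatGrad p.1 p.2).indicator measurableSet_Iio).aestronglyMeasurable
  · have h2 : ∀ᶠ p : ℝ × ℝ in 𝓝 (t, x), p.1 < T :=
      continuousAt_fst.eventually_lt continuousAt_const htT
    have h3 : ∀ᶠ p : ℝ × ℝ in 𝓝 (t, x), |p.2| < |x| + 1 :=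
      continuousAt_snd.abs.eventually_lt continuousAt_const (by simp)
    filter_upwards [h2, h3] with p hp2 hp3
    rw [ae_restrict_iff' measurableSet_Ioc]
    refine Eventually.of_forall fun s hs => ?_
    by_cases hsp : s < p.1
    · rw [Set.indicator_of_mem (by exact hsp)]
      refine (hf.heatGrad_le hk hK hs.2 (by linarith) (by linarith [hs.1]) p.2).trans ?_
      gcongr
    · rw [Set.indicator_of_notMem (by exact hsp), norm_zero]
      positivity
  · rw [ae_restrict_iff' measurableSet_Ioc]
    filter_upwards [Measure.ae_ne volume t] with s hst hs
    rcases lt_or_gt_of_ne hst with hlt | hgt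
    · have h1 : ∀ᶠ p : ℝ × ℝ in 𝓝 (t, x), s < p.1 :=
        continuousAt_const.eventually_lt continuousAt_fst hlt
      have h2 : ∀ᶠ p : ℝ × ℝ in 𝓝 (t, x), p.1 < T :=
        continuousAt_fst.eventually_lt continuousAt_const htT
      have hev : (fun p : ℝ × ℝ => heatGrad s (f (p.1 - s)) p.2) =ᶠ[𝓝 (t, x)]
          fun p => (Set.Iio p.1).indicator (fun s => heatGrad s (f (p.1 - s)) p.2) s := by
        filter_upwards [h1] with p hp
        rw [Set.indicator_of_mem (by exact hp)]
      refine ContinuousAt.congr ?_ hev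
      refine continuousAt_heatGrad_joint (G := fun p : ℝ × ℝ => f (p.1 - s)) (S := fun _ => s)
        (X := fun p => p.2) hk hK continuousAt_const continuousAt_snd hs.1 (fun y => ?_)
        (Eventually.of_forall fun p => hf.meas_slice _) ?_
      · have : ContinuousAt (fun q : (ℝ × ℝ) × ℝ => (q.1.1 - s, q.2)) ((t, x), y) := by fun_prop
        exact ContinuousAt.comp (x := ((t, x), y)) (f := fun q : (ℝ × ℝ) × ℝ => (q.1.1 - s, q.2))
          (g := Function.uncurry f) (hf.cont (t - s) (by linarith) y) this
      · filter_upwards [h1, h2] with p hp1 hp2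
        exact hf.bound _ (by linarith) (by linarith [hs.1])
    · have h1 : ∀ᶠ p : ℝ × ℝ in 𝓝 (t, x), p.1 < s :=
        continuousAt_fst.eventually_lt continuousAt_const hgt
      refine (continuousAt_const (y := (0:ℝ))).congr ?_
      filter_upwards [h1] with p hp
      rw [Set.indicator_of_notMem]
      simpa using hp.le

/-- If the source is differentiable in space, the derivative can fall on the source. -/
lemma Source.heatPotGrad_eq_heatPot {f' : ℝ → ℝ → ℝ} (hf : Source T K k f)
    (hf' : Source T K k f') (hk : 0 ≤ k) (hK : 0 ≤ K)
    (hd : ∀ r, 0 < r → ∀ y, HasDerivAt (f r) (f' r y) y) {t : ℝ}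
    (ht : 0 < t) (htT : t ≤ T) (x : ℝ) : heatPotGrad f t x = heatPot f' t x := by
  refine intervalIntegral.integral_congr_ae ?_
  filter_upwards [ae_lt_of_uIoc ht.le] with s hs hs'
  obtain ⟨h1, h2⟩ := hs hs'
  exact heatGrad_eq_heat hk hK (hf.meas_slice _) (hf.bound _ (by linarith) (by linarith))
    (hf'.meas_slice _) (hf'.bound _ (by linarith) (by linarith)) (hd _ (by linarith)) h1 x

lemma heatGrad_of_nonpos {s : ℝ} (hs : s ≤ 0) (g : ℝ → ℝ) (x : ℝ) : heatGrad s g x = 0 := by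
  rw [heatGrad, Real.sqrt_eq_zero_of_nonpos (by linarith), inv_zero, zero_mul]

/-- Integrability over the triangle `0 < r < τ < t`, from the convolution of a constant with
`s^(-1/2)`. The half `τ ≤ r` of the square contributes nothing, as `heatGrad` vanishes there. -/
lemma Source.integrable_heatGrad_prod (hf : Source T K k f) (hk : 0 ≤ k) (hK : 0 ≤ K)
    {t : ℝ} (ht : 0 < t) (htT : t ≤ T) (x : ℝ) :
    Integrable (Function.uncurry fun τ r => heatGrad (τ - r) (f r) x)
      ((volume.restrict (Set.Ioc 0 t)).prod (volume.restrict (Set.Ioc 0 t))) := by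
  have hE := expMoment_nonneg (k * √(2 * T) + 1)
  set C := K * exp (k * |x|) * expMoment (k * √(2 * T) + 1) with hC
  have hC0 : 0 ≤ C := by positivity
  have hconv := Integrable.convolution_integrand (μ := (volume : Measure ℝ))
    (ν := (volume : Measure ℝ)) (ContinuousLinearMap.mul ℝ ℝ)
    (f := (Set.Ioc 0 t).indicator fun _ => C)
    (g := (Set.Ioc 0 t).indicator fun s => (√(2 * s))⁻¹)
    ((integrable_indicator_iff measurableSet_Ioc).2 (integrableOn_const (by simp)))
    ((integrable_indicator_iff measurableSet_Ioc).2 (integrableOn_inv_sqrt ht.le))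
  rw [Measure.prod_restrict]
  refine Integrable.mono' hconv.integrableOn ?_ ?_
  · refine Measurable.aestronglyMeasurable ?_
    exact measurable_heatGrad_family (α := ℝ × ℝ) (G := fun p => f p.2) (S := fun p => p.1 - p.2)
      (hf.meas.comp (f := fun q : (ℝ × ℝ) × ℝ => (q.1.2, q.2)) (by fun_prop)) (by fun_prop) x
  · rw [ae_restrict_iff' (measurableSet_Ioc.prod measurableSet_Ioc)]
    refine Eventually.of_forall fun p hp => ?_
    obtain ⟨⟨h1, h2⟩, h3, h4⟩ := hp
    simp only [Function.uncurry, ContinuousLinearMap.mul_apply']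
    by_cases hpos : 0 < p.1 - p.2
    · rw [Set.indicator_of_mem (show p.2 ∈ Set.Ioc 0 t from ⟨h3, h4⟩),
        Set.indicator_of_mem (show p.1 - p.2 ∈ Set.Ioc 0 t from ⟨hpos, by linarith⟩), mul_comm]
      exact hf.heatGrad_le hk hK (by linarith) h3 (by linarith) x
    · rw [heatGrad_of_nonpos (not_lt.1 hpos), norm_zero]
      refine mul_nonneg (Set.indicator_nonneg (fun _ _ => hC0) _)
        (Set.indicator_nonneg (fun _ _ => by positivity) _)

/-- Duhamel's integral recovered from its time derivative: both sides are the integral of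
`heatGrad (τ - r) (f' r) x` over the triangle `0 < r < τ < t`. -/
lemma Source.heatPot_eq {f' : ℝ → ℝ → ℝ} (hf : Source T K k f)
    (hf' : Source T K k f') (hk : 0 ≤ k) (hK : 0 ≤ K)
    (hd : ∀ r, 0 < r → ∀ y, HasDerivAt (f r) (f' r y) y) {t : ℝ}
    (ht : 0 < t) (htT : t ≤ T) (x : ℝ) :
    heatPot f t x = (∫ r in (0:ℝ)..t, f r x) + ∫ τ in (0:ℝ)..t, heatPotGrad f' τ x := by
  have hfx : IntervalIntegrable (fun r => f r x) volume 0 t := by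
    refine (intervalIntegrable_const (c := K * exp (k * |x|))).mono_fun'
      (hf.meas.comp (f := fun r => (r, x)) (by fun_prop)).aestronglyMeasurable ?_
    rw [EventuallyLE, ae_restrict_iff' measurableSet_uIoc]
    filter_upwards [ae_lt_of_uIoc ht.le] with s hs hs'
    obtain ⟨h1, h2⟩ := hs hs'
    exact hf.bound _ h1 (by linarith) x
  have hP : heatPot f t x = ∫ r in (0:ℝ)..t, heat (t - r) (f r) x := by
    have := intervalIntegral.integral_comp_sub_left (fun r => heat (t - r) (f r) x) t
      (a := 0) (b := t)
    simp only [sub_sub_cancel, sub_self, sub_zero] at this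
    exact this
  have hPi : IntervalIntegrable (fun r => heat (t - r) (f r) x) volume 0 t := by
    have := ((hf.intervalIntegrable_heat hk hK ht htT x).comp_sub_left t).symm
    simpa using this
  have hG : ∀ τ ∈ Set.Ioc 0 t, heatPotGrad f' τ x =
      ∫ r in Set.Ioc 0 t, heatGrad (τ - r) (f' r) x := by
    intro τ hτ
    have := intervalIntegral.integral_comp_sub_left (fun r => heatGrad (τ - r) (f' r) x) τ
      (a := 0) (b := τ)
    simp only [sub_sub_cancel, sub_self, sub_zero] at this
    rw [heatPotGrad, this, intervalIntegral.integral_of_le hτ.1.le]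
    refine (setIntegral_eq_of_subset_of_forall_sdiff_eq_zero measurableSet_Ioc
      (Set.Ioc_subset_Ioc_right hτ.2) fun r hr => ?_).symm
    refine heatGrad_of_nonpos ?_ _ _
    by_contra hcon
    exact hr.2 ⟨hr.1.1, by linarith⟩
  have hint := hf'.integrable_heatGrad_prod hk hK ht htT x
  have hin : ∀ᵐ r ∂(volume.restrict (Set.Ioc 0 t)),
      ∫ τ in Set.Ioc 0 t, heatGrad (τ - r) (f' r) x = heat (t - r) (f r) x - f r x := by
    have hsl := hint.prod_left_ae
    rw [ae_restrict_iff' measurableSet_Ioc] at hsl ⊢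
    filter_upwards [hsl] with r hi hr
    have hi := hi hr
    have hIoc : Set.Ioc r t ⊆ Set.Ioc 0 t := Set.Ioc_subset_Ioc_left hr.1.le
    have h1 : ∫ τ in Set.Ioc 0 t, heatGrad (τ - r) (f' r) x =
        ∫ τ in r..t, heatGrad (τ - r) (f' r) x := by
      rw [intervalIntegral.integral_of_le hr.2]
      refine setIntegral_eq_of_subset_of_forall_sdiff_eq_zero measurableSet_Ioc hIoc
        fun τ hτ => heatGrad_of_nonpos ?_ _ _
      by_contra hcon
      exact hτ.2 ⟨by linarith, hτ.1.2⟩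
    have hi2 : IntervalIntegrable (fun τ => heatGrad (τ - r) (f' r) x) volume r t := by
      rw [intervalIntegrable_iff_integrableOn_Ioc_of_le hr.2]
      exact IntegrableOn.mono_set (t := Set.Ioc 0 t) hi hIoc
    have hi3 := hi2.comp_add_right r
    simp only [add_sub_cancel_right, sub_self] at hi3
    rw [h1, intervalIntegral.integral_comp_sub_right (fun σ => heatGrad σ (f' r) x) r, sub_self,
      integral_heatGrad hk hK (hf.meas_slice r) (hf.bound r hr.1 (by linarith [hr.2]))
        (hf'.meas_slice r) (hf'.bound r hr.1 (by linarith [hr.2])) (hd r hr.1)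
        (by linarith [hr.2]) x hi3]
  have hswap : ∫ τ in (0:ℝ)..t, heatPotGrad f' τ x =
      ∫ r in (0:ℝ)..t, (heat (t - r) (f r) x - f r x) := by
    rw [intervalIntegral.integral_of_le ht.le, intervalIntegral.integral_of_le ht.le,
      setIntegral_congr_fun measurableSet_Ioc hG, integral_integral_swap hint]
    exact integral_congr_ae hin
  rw [hswap, intervalIntegral.integral_sub hPi hfx, hP]
  ring

/-- The time derivative of the heat potential, `∂ₜP = f + ∂ₓ(heat potential of ∂ₓf)`, from the
fundamental theorem of calculus in `Source.heatPot_eq`. -/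
lemma Source.hasDerivAt_heatPot_time {f' : ℝ → ℝ → ℝ} (hf : Source T K k f)
    (hf' : Source T K k f') (hk : 0 ≤ k) (hK : 0 ≤ K)
    (hd : ∀ r, 0 < r → ∀ y, HasDerivAt (f r) (f' r y) y) {t : ℝ}
    (ht : 0 < t) (htT : t < T) (x : ℝ) :
    HasDerivAt (fun τ => heatPot f τ x) (f t x + heatPotGrad f' t x) t := by
  have hev : (fun τ => heatPot f τ x) =ᶠ[𝓝 t]
      fun τ => (∫ r in (0:ℝ)..τ, f r x) + ∫ σ in (0:ℝ)..τ, heatPotGrad f' σ x := by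
    filter_upwards [Ioo_mem_nhds ht htT] with τ hτ
    exact hf.heatPot_eq hf' hk hK hd hτ.1 hτ.2.le x
  have c1 : ∀ r, 0 < r → ContinuousAt (fun r => f r x) r := fun r hr =>
    ContinuousAt.comp (g := Function.uncurry f) (f := fun r => (r, x)) (hf.cont r hr x)
      (by fun_prop)
  have c2 : ∀ r, 0 < r → r < T → ContinuousAt (fun r => heatPotGrad f' r x) r := fun r hr hr' =>
    ContinuousAt.comp (g := fun p : ℝ × ℝ => heatPotGrad f' p.1 p.2) (f := fun r => (r, x))
      (hf'.continuousAt_heatPotGrad hk hK hr hr' x) (by fun_prop)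
  have m1 : Measurable (fun r => f r x) := hf.meas.comp (f := fun r => (r, x)) (by fun_prop)
  have co2 : ContinuousOn (fun r => heatPotGrad f' r x) (Set.Ioo 0 T) :=
    fun r hr => (c2 r hr.1 hr.2).continuousWithinAt
  have m2 : AEStronglyMeasurable (fun r => heatPotGrad f' r x) (volume.restrict (Set.Ioo 0 T)) :=
    co2.aestronglyMeasurable measurableSet_Ioo
  refine HasDerivAt.congr_of_eventuallyEq ?_ hev
  refine HasDerivAt.add (intervalIntegral.integral_hasDerivAt_right ?_
    m1.stronglyMeasurable.stronglyMeasurableAtFilter (c1 t ht))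
    (intervalIntegral.integral_hasDerivAt_right ?_
    ⟨Set.Ioo 0 T, Ioo_mem_nhds ht htT, m2⟩ (c2 t ht htT))
  · refine (intervalIntegrable_const (c := K * exp (k * |x|))).mono_fun'
      m1.aestronglyMeasurable ?_
    rw [EventuallyLE, ae_restrict_iff' measurableSet_uIoc]
    filter_upwards [ae_lt_of_uIoc ht.le] with s hs hs'
    obtain ⟨h1, h2⟩ := hs hs'
    exact hf.bound _ h1 (by linarith) x
  · refine (intervalIntegrable_const (c := (K * expMoment (k * √(2 * T) + 1) *
      ∫ s in Set.Ioc 0 T, (√(2 * s))⁻¹) * exp (k * |x|))).mono_fun' ?_ ?_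
    · rw [Set.uIoc_of_le ht.le]
      exact m2.mono_measure (Measure.restrict_mono
        (fun s hs => show s ∈ Set.Ioo 0 T from ⟨hs.1, hs.2.trans_lt htT⟩) le_rfl)
    rw [EventuallyLE, ae_restrict_iff' measurableSet_uIoc]
    filter_upwards [ae_lt_of_uIoc ht.le] with s hs hs'
    obtain ⟨h1, h2⟩ := hs hs'
    exact hf'.abs_heatPotGrad_le hk hK h1 (by linarith) x

end

/-! ### Regularity of solutions of Duhamel's equation -/

lemma Source.mono {T K k K' k' : ℝ} {f : ℝ → ℝ → ℝ} (hf : Source T K k f) (hK : 0 ≤ K)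
    (hKK : K ≤ K') (hkk : k ≤ k') : Source T K' k' f :=
  ⟨hf.meas, fun r h1 h2 y => (hf.bound r h1 h2 y).trans
    (mul_le_mul hKK (by gcongr) (exp_pos _).le (hK.trans hKK)), hf.cont⟩

/-- A function on the half-space `r > 0`, extended by zero, is measurable if it is continuous
there. -/
lemma measurable_of_continuousAt_pos {g : ℝ → ℝ → ℝ}
    (hg : ∀ r, 0 < r → ∀ y, ContinuousAt (Function.uncurry g) (r, y))
    (h0 : ∀ r ≤ 0, ∀ y, g r y = 0) : Measurable (Function.uncurry g) := by
  have hopen : IsOpen {p : ℝ × ℝ | 0 < p.1} := isOpen_lt continuous_const continuous_fst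
  have h1 : ContinuousOn (Function.uncurry g) {p : ℝ × ℝ | 0 < p.1} :=
    fun p hp => (hg p.1 hp p.2).continuousWithinAt
  have h2 := h1.measurable_piecewise (g := fun _ => (0:ℝ)) (continuousOn_const) hopen.measurableSet
  classical
  convert h2 using 1
  ext p
  by_cases hp : 0 < p.1
  · rw [Set.piecewise_eq_of_mem _ _ _ (by exact hp)]
  · rw [Set.piecewise_eq_of_notMem _ _ _ (by exact hp)]
    exact h0 _ (not_lt.1 hp) _

lemma continuousAt_congr_pos {g h : ℝ → ℝ → ℝ} (hgh : ∀ r, 0 < r → ∀ y, g r y = h r y)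
    {r y : ℝ} (hr : 0 < r) (hg : ContinuousAt (Function.uncurry g) (r, y)) :
    ContinuousAt (Function.uncurry h) (r, y) := by
  refine hg.congr ?_
  have : ∀ᶠ p : ℝ × ℝ in 𝓝 (r, y), 0 < p.1 :=
    continuousAt_const.eventually_lt continuousAt_fst hr
  filter_upwards [this] with p hp
  exact hgh p.1 hp p.2

lemma sq_le_exp_abs (y : ℝ) : y ^ 2 ≤ 2 * exp |y| := by
  have := quadratic_le_exp_of_nonneg (abs_nonneg y)
  rw [sq_abs] at this
  linarith [abs_nonneg y]

/-- A continuous solution of Duhamel's equation that is bounded on `(0,T] × ℝ` for every `T` is a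
classical solution. The first
application of the potential estimates gives `∂ₓv`, hence `∂ₓ` of the source `(x² + c)v`, and
the second one then gives `∂ₜv` and `∂ₓₓv`. -/
theorem mild_solution_is_classical
    {v c cx : ℝ → ℝ → ℝ} {v₀ v₀' : ℝ → ℝ} {M : ℝ} (hM : 0 ≤ M)
    (hv : Continuous (Function.uncurry v))
    (hvb : ∀ T, ∃ B, 0 ≤ B ∧ ∀ r, 0 < r → r ≤ T → ∀ y, |v r y| ≤ B)
    (hc : Continuous (Function.uncurry c)) (hcb : ∀ r y, |c r y| ≤ M)
    (hcd : ∀ r, 0 < r → ∀ y, HasDerivAt (c r) (cx r y) y)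
    (hcx : ∀ r, 0 < r → ∀ y, ContinuousAt (Function.uncurry cx) (r, y))
    (hcxb : ∀ r, 0 < r → ∀ y, |cx r y| ≤ M)
    (hv₀b : ∀ y, |v₀ y| ≤ M) (hv₀d : ∀ y, HasDerivAt v₀ (v₀' y) y)
    (hv₀' : Continuous v₀') (hv₀'b : ∀ y, |v₀' y| ≤ M)
    (hD : ∀ t, 0 < t → ∀ x, v t x =
      heat t v₀ x - heatPot (fun r y => (y ^ 2 + c r y) * v r y) t x)
    {t : ℝ} (ht : 0 < t) (x : ℝ) :
    ∃ (v₁ : ℝ → ℝ) (Dt D₂ : ℝ), HasDerivAt (fun τ => v τ x) Dt t ∧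
      (∀ y, HasDerivAt (v t) (v₁ y) y) ∧ HasDerivAt v₁ D₂ x ∧
      Dt - D₂ + (x ^ 2 + c t x) * v t x = 0 := by
  have hv₀c : Continuous v₀ := continuous_iff_continuousAt.2 fun y => (hv₀d y).continuousAt
  set F : ℝ → ℝ → ℝ := fun r y => (y ^ 2 + c r y) * v r y with hF
  have hFc : Continuous (Function.uncurry F) := by
    have : Function.uncurry F = fun p : ℝ × ℝ =>
        (p.2 ^ 2 + Function.uncurry c p) * Function.uncurry v p := rfl
    rw [this]; fun_prop
  have hexp1 : ∀ y : ℝ, 1 ≤ exp |y| := fun y => one_le_exp (abs_nonneg y)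
  have hVb : ∀ r y, |y ^ 2 + c r y| ≤ (2 + M) * exp |y| := fun r y => by
    refine (abs_add_le _ _).trans ?_
    rw [abs_of_nonneg (sq_nonneg y)]
    nlinarith [sq_le_exp_abs y, hcb r y, hexp1 y]
  have hFs : ∀ T, ∃ K, 0 ≤ K ∧ Source T K 1 F := by
    intro T
    obtain ⟨B, hB0, hB⟩ := hvb T
    refine ⟨(2 + M) * B, by positivity, hFc.measurable, fun r h1 h2 y => ?_,
      fun r _ y => hFc.continuousAt⟩
    rw [hF]
    simp only [abs_mul, one_mul]
    calc _ ≤ (2 + M) * exp |y| * B :=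
          mul_le_mul (hVb r y) (hB r h1 h2 y) (abs_nonneg _) (by positivity)
      _ = _ := by ring
  set v₁ : ℝ → ℝ → ℝ := fun r y => heat r v₀' y - heatPotGrad F r y with hv₁
  have hMg : ∀ {g : ℝ → ℝ}, (∀ y, |g y| ≤ M) → ∀ y, |g y| ≤ M * exp (1 * |y|) := by
    intro g hg y
    rw [one_mul]
    nlinarith [hg y, hexp1 y]
  have hvd : ∀ r, 0 < r → ∀ y, HasDerivAt (v r) (v₁ r y) y := by
    intro r hr y
    obtain ⟨K, hK, hS⟩ := hFs r
    have h1 := (hasDerivAt_heat' zero_le_one hM hv₀c.measurable (hMg hv₀b) hv₀'.measurable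
      (hMg hv₀'b) hv₀d r y).sub (hS.hasDerivAt_heatPot zero_le_one hK hr le_rfl y)
    refine h1.congr_of_eventuallyEq (Eventually.of_forall fun z => hD r hr z)
  have hv₁c : ∀ r, 0 < r → ∀ y, ContinuousAt (Function.uncurry v₁) (r, y) := by
    intro r hr y
    obtain ⟨K, hK, hS⟩ := hFs (r + 1)
    refine ContinuousAt.sub ?_
      (hS.continuousAt_heatPotGrad zero_le_one hK hr (by linarith) y)
    exact continuousAt_heat_joint (G := fun _ : ℝ × ℝ => v₀') (S := fun p => p.1)
      (X := fun p => p.2) zero_le_one hM continuousAt_fst continuousAt_snd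
      (fun y => (hv₀'.comp continuous_snd).continuousAt)
      (Eventually.of_forall fun _ => hv₀'.measurable)
      (Eventually.of_forall fun _ => hMg hv₀'b)
  set F₁ : ℝ → ℝ → ℝ := fun r y =>
    if 0 < r then (2 * y + cx r y) * v r y + (y ^ 2 + c r y) * v₁ r y else 0 with hF₁
  have hFd : ∀ r, 0 < r → ∀ y, HasDerivAt (F r) (F₁ r y) y := by
    intro r hr y
    have h1 : HasDerivAt (fun y : ℝ => y ^ 2 + c r y) (2 * y + cx r y) y := by
      refine (((hasDerivAt_id y).pow 2).add (hcd r hr y)).congr_deriv ?_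
      simp
    refine (h1.mul (hvd r hr y)).congr_deriv ?_
    simp only [hF₁, if_pos hr]
  have hF₁c : ∀ r, 0 < r → ∀ y, ContinuousAt (Function.uncurry F₁) (r, y) := by
    intro r hr y
    refine continuousAt_congr_pos (g := fun r y =>
      (2 * y + cx r y) * v r y + (y ^ 2 + c r y) * v₁ r y)
      (fun r hr y => by simp only [hF₁, if_pos hr]) hr ?_
    have e1 : ContinuousAt (fun p : ℝ × ℝ => p.2) (r, y) := continuousAt_snd
    exact (((e1.const_mul 2).add (hcx r hr y)).mul hv.continuousAt).add
      (((e1.pow 2).add hc.continuousAt).mul (hv₁c r hr y))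
  have hF₁m : Measurable (Function.uncurry F₁) :=
    measurable_of_continuousAt_pos hF₁c fun r hr y => by simp only [hF₁, if_neg (not_lt.2 hr)]
  -- the sources `F` and `F₁` on a time interval reaching beyond `t`, with common constants
  obtain ⟨K, hK, hS⟩ := hFs (t + 1)
  obtain ⟨B, hB0, hB⟩ := hvb (t + 1)
  set C₁ := M * expMoment (1 * √(2 * (t + 1))) + K * expMoment (1 * √(2 * (t + 1)) + 1) *
      ∫ s in Set.Ioc 0 (t + 1), (√(2 * s))⁻¹ with hC₁
  have hC₁0 : 0 ≤ C₁ := by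
    have := expMoment_nonneg (1 * √(2 * (t + 1)))
    have := expMoment_nonneg (1 * √(2 * (t + 1)) + 1)
    have : 0 ≤ ∫ s in Set.Ioc 0 (t + 1), (√(2 * s))⁻¹ :=
      integral_nonneg fun s => by positivity
    positivity
  have hv₁b : ∀ r, 0 < r → r ≤ t + 1 → ∀ y, |v₁ r y| ≤ C₁ * exp |y| := by
    intro r hr hrT y
    have h1 := abs_heat_le zero_le_one hM (hMg hv₀'b) hrT y
    have h2 := hS.abs_heatPotGrad_le zero_le_one hK hr hrT y
    have h3 := abs_sub (heat r v₀' y) (heatPotGrad F r y)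
    rw [hC₁]
    rw [one_mul |y|] at h1 h2
    calc _ ≤ _ := h3
      _ ≤ _ := add_le_add h1 h2
      _ = _ := by ring
  set K₁ := K + (2 + M) * B + (2 + M) * C₁ with hK₁
  have hK₁0 : 0 ≤ K₁ := by positivity
  have hKK₁ : K ≤ K₁ := by
    have e1 : 0 ≤ (2 + M) * B := by positivity
    have e2 : 0 ≤ (2 + M) * C₁ := by positivity
    rw [hK₁]; linarith
  have hS' : Source (t + 1) K₁ 2 F :=
    hS.mono hK hKK₁ (by norm_num)
  have hS₁ : Source (t + 1) K₁ 2 F₁ := by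
    refine ⟨hF₁m, fun r h1 h2 y => ?_, hF₁c⟩
    simp only [hF₁, if_pos h1]
    refine (abs_add_le _ _).trans ?_
    rw [abs_mul, abs_mul]
    have e1 : |2 * y + cx r y| ≤ (2 + M) * exp |y| := by
      refine (abs_add_le _ _).trans ?_
      rw [abs_mul, abs_two]
      nlinarith [abs_le_exp_abs y, hcxb r h1 y, hexp1 y]
    have e2 : exp (2 * |y|) = exp |y| * exp |y| := by rw [← exp_add]; ring_nf
    have e3 : |2 * y + cx r y| * |v r y| ≤ (2 + M) * exp |y| * B :=
      mul_le_mul e1 (hB r h1 h2 y) (abs_nonneg _) (by positivity)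
    have e4 : |y ^ 2 + c r y| * |v₁ r y| ≤ (2 + M) * exp |y| * (C₁ * exp |y|) :=
      mul_le_mul (hVb r y) (hv₁b r h1 h2 y) (abs_nonneg _) (by positivity)
    have e5 : (2 + M) * exp |y| * B ≤ (2 + M) * B * (exp |y| * exp |y|) := by
      have : exp |y| ≤ exp |y| * exp |y| := le_mul_of_one_le_left (exp_pos _).le (hexp1 y)
      calc _ = (2 + M) * B * exp |y| := by ring
        _ ≤ _ := by gcongr
    rw [e2, hK₁]
    nlinarith [mul_nonneg hK (mul_pos (exp_pos |y|) (exp_pos |y|)).le]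
  refine ⟨v₁ t, heatGrad t v₀' x - (F t x + heatPotGrad F₁ t x),
    heatGrad t v₀' x - heatPotGrad F₁ t x, ?_, hvd t ht, ?_, ?_⟩
  · have h1 := (hasDerivAt_heat_time zero_le_one hM hv₀c.measurable (hMg hv₀b) hv₀'.measurable
      (hMg hv₀'b) hv₀d ht x).sub
        (hS'.hasDerivAt_heatPot_time hS₁ zero_le_two hK₁0 hFd ht (by linarith) x)
    refine h1.congr_of_eventuallyEq ?_
    filter_upwards [lt_mem_nhds ht] with τ hτ
    exact hD τ hτ x
  · have h1 := (_root_.hasDerivAt_heat zero_le_one hM hv₀'.measurable (hMg hv₀'b) ht x).sub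
      (hS₁.hasDerivAt_heatPot zero_le_two hK₁0 ht (by linarith) x)
    refine h1.congr_of_eventuallyEq (Eventually.of_forall fun z => ?_)
    simp only [hv₁, Pi.sub_apply]
    rw [hS'.heatPotGrad_eq_heatPot hS₁ zero_le_two hK₁0 hFd ht (by linarith) z]
  · simp only [hF]; ring

/-! ### The finite-dimensional Markov property of Wiener measure -/

instance : BorelSpace CW := ⟨rfl⟩

lemma CW.continuous_eval : Continuous fun p : CW × ℝ => p.1.eval p.2 := by
  have h1 : Continuous (fun w : CW => w.1) := continuous_subtype_val
  have h2 : Continuous (fun p : CW × ℝ => (p.1.1, Set.projIcc (0:ℝ) 1 zero_le_one p.2)) :=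
    (h1.comp continuous_fst).prodMk (continuous_projIcc.comp continuous_snd)
  exact ContinuousEval.continuous_eval.comp h2

@[fun_prop]
lemma CW.continuous_eval_comp {α : Type*} [TopologicalSpace α] {f : α → CW} {g : α → ℝ}
    (hf : Continuous f) (hg : Continuous g) : Continuous fun a => (f a).eval (g a) :=
  CW.continuous_eval.comp (hf.prodMk hg)

lemma CW.eval_zero (w : CW) : w.eval 0 = 0 := by
  have : Set.projIcc (0:ℝ) 1 zero_le_one 0 = ⟨0, by norm_num⟩ := Set.projIcc_left _
  rw [CW.eval, this]
  exact w.2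

lemma prevVal_cons_zero {n : ℕ} (a : ℝ) (v : Fin n → ℝ) :
    prevVal (Fin.cons a v : Fin (n + 1) → ℝ) 0 = 0 := by simp [prevVal]

lemma prevVal_cons_succ {n : ℕ} (a b : ℝ) (v : Fin n → ℝ) (k : Fin n) :
    prevVal (Fin.cons a (fun i => a + b * v i) : Fin (n + 1) → ℝ) k.succ =
      a + b * prevVal v k := by
  unfold prevVal
  rcases Nat.eq_zero_or_pos (k : ℕ) with h | h
  · have h1 : (⟨(k.succ : ℕ) - 1, by omega⟩ : Fin (n + 1)) = 0 := by
      ext; simp [h]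
    simp only [Fin.val_succ, Nat.add_eq_zero_iff, one_ne_zero, and_false, dite_false, h,
      dite_true] at h1 ⊢
    rw [h1]; simp
  · have h1 : (⟨(k.succ : ℕ) - 1, by omega⟩ : Fin (n + 1)) =
        Fin.succ (⟨(k : ℕ) - 1, by omega⟩ : Fin n) := by
      ext; simp; omega
    simp only [Fin.val_succ, Nat.add_eq_zero_iff, one_ne_zero, and_false, dite_false,
      h.ne'] at h1 ⊢
    rw [h1, Fin.cons_succ]

/-- The finite-dimensional density factorizes at its first time `σ`: the value there is
`N(0,σ)`, and the rescaled increments after `σ` have again a Brownian density. -/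
lemma normalDensity_cons {n : ℕ} {σ : ℝ} (h0 : 0 < σ) (h1 : σ < 1) (u η : Fin n → ℝ) (y : ℝ) :
    normalDensity (Fin.cons σ (fun i => σ + (1 - σ) * u i) : Fin (n + 1) → ℝ)
      (Fin.cons y (fun i => y + √(1 - σ) * η i)) =
    ProbabilityTheory.gaussianPDFReal 0 σ.toNNReal y * (√(1 - σ) ^ n)⁻¹ * normalDensity u η := by
  have hb : 0 < 1 - σ := by linarith
  have hq : ∀ p q : ℝ, (√(1 - σ) * p) ^ 2 / ((1 - σ) * q) = p ^ 2 / q := fun p q => by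
    rw [mul_pow, Real.sq_sqrt hb.le, mul_div_mul_left _ _ hb.ne']
  unfold normalDensity
  rw [Fin.prod_univ_succ, Fin.sum_univ_succ]
  simp only [prevVal_cons_zero, prevVal_cons_succ, Fin.cons_zero, Fin.cons_succ, sub_zero,
    add_sub_add_left_eq_sub, ← mul_sub, hq,
    Finset.prod_mul_distrib, Finset.prod_const, Finset.card_univ,
    Fintype.card_fin]
  unfold ProbabilityTheory.gaussianPDFReal
  rw [mul_add, exp_add]
  have hs : √((2 * π) ^ (n + 1) * (σ * ((1 - σ) ^ n * ∏ i, (u i - prevVal u i)))) =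
      √(2 * π * σ) * (√(1 - σ) ^ n * √((2 * π) ^ n * ∏ i, (u i - prevVal u i))) := by
    rw [show (2 * π) ^ (n + 1) * (σ * ((1 - σ) ^ n * ∏ i, (u i - prevVal u i))) =
      (2 * π * σ) * ((1 - σ) ^ n * ((2 * π) ^ n * ∏ i, (u i - prevVal u i))) by ring,
      Real.sqrt_mul (by positivity)]
    congr 1
    rw [show (1 - σ) ^ n = (√(1 - σ) ^ n) ^ 2 by
      rw [← pow_mul, mul_comm n 2, pow_mul, Real.sq_sqrt hb.le], Real.sqrt_mul (by positivity),
      Real.sqrt_sq (by positivity)]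
  rw [hs, mul_inv, mul_inv]
  have he : -(1 / 2) * (y ^ 2 / σ) = -y ^ 2 / (2 * σ) := by field_simp
  simp only [sub_zero, Real.coe_toNNReal σ h0.le, he]
  ring

lemma measurable_normalDensity {n : ℕ} (t : Fin n → ℝ) : Measurable (normalDensity t) := by
  have hp (i : Fin n) : Measurable fun ξ : Fin n → ℝ => prevVal ξ i := by
    by_cases h : (i : ℕ) = 0
    · simp [prevVal, h]
    · have e : (fun ξ : Fin n → ℝ => prevVal ξ i) = fun ξ => ξ ⟨(i : ℕ) - 1, by omega⟩ := by
        funext ξ; simp [prevVal, h]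
      rw [e]; exact measurable_pi_apply _
  unfold normalDensity
  exact (Real.measurable_exp.comp ((Finset.measurable_sum _ fun i _ =>
    (((measurable_pi_apply i).sub (hp i)).pow_const 2).div_const _).const_mul _)).const_mul _

/-- The affine change of variables `ξ = y + b η` in `n` dimensions. -/
lemma lintegral_affine {n : ℕ} {b : ℝ} (hb : 0 < b) (y : ℝ) (G : (Fin n → ℝ) → ENNReal)
    (hG : Measurable G) :
    ∫⁻ ξ, G ξ = ENNReal.ofReal (b ^ n) * ∫⁻ η : Fin n → ℝ, G (fun i => y + b * η i) := by
  rw [← lintegral_add_left_eq_self G (fun _ => y)]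
  have h := Measure.map_addHaar_smul (volume : Measure (Fin n → ℝ)) hb.ne'
  have h2 : ∫⁻ η : Fin n → ℝ, G (fun i => y + b * η i) =
      ∫⁻ ξ, G ((fun _ => y) + ξ) ∂(Measure.map (b • ·) (volume : Measure (Fin n → ℝ))) := by
    rw [lintegral_map (by fun_prop) (by fun_prop)]
    rfl
  rw [h2, h, lintegral_smul_measure, smul_eq_mul, ← mul_assoc, Module.finrank_fin_fun,
    abs_of_pos (by positivity), ← ENNReal.ofReal_mul (by positivity),
    mul_inv_cancel₀ (by positivity), ENNReal.ofReal_one, one_mul]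

lemma measurable_evals {n : ℕ} (t : Fin n → ℝ) :
    Measurable fun (w : CW) (i : Fin n) => w.eval (t i) :=
  measurable_pi_lambda _ fun _ =>
    (CW.continuous_eval_comp continuous_id continuous_const).measurable

lemma measurable_cons {n : ℕ} :
    Measurable fun p : ℝ × (Fin n → ℝ) => (Fin.cons p.1 p.2 : Fin (n + 1) → ℝ) := by
  refine measurable_pi_lambda _ fun i => ?_
  cases i using Fin.cases with
  | zero => simpa using measurable_fst
  | succ i => simp only [Fin.cons_succ]; exact (measurable_pi_apply i).comp measurable_snd

/-- The slice of the Markov property at a fixed value `y` at time `σ`. -/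
lemma lintegral_slice {μ : Measure CW} (hμ : IsWienerMeasure μ) {σ : ℝ} (h0 : 0 < σ)
    (h1 : σ < 1) {n : ℕ} (u : Fin n → ℝ) (hu : StrictMono u) (hu0 : ∀ i, 0 < u i)
    (hu1 : ∀ i, u i ≤ 1) (y : ℝ) (F : (Fin (n + 1) → ℝ) → ENNReal) (hF : Measurable F) :
    ∫⁻ ζ : Fin n → ℝ, ENNReal.ofReal (normalDensity
        (Fin.cons σ (fun i => σ + (1 - σ) * u i) : Fin (n + 1) → ℝ) (Fin.cons y ζ)) *
        F (Fin.cons y ζ) =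
      ProbabilityTheory.gaussianPDF 0 σ.toNNReal y *
        ∫⁻ w, F (Fin.cons y (fun i => y + √(1 - σ) * w.eval (u i))) ∂μ := by
  have hsb : 0 < √(1 - σ) := Real.sqrt_pos.2 (by linarith)
  have hc : Measurable fun ζ : Fin n → ℝ => (Fin.cons y ζ : Fin (n + 1) → ℝ) :=
    measurable_cons.comp (measurable_const.prodMk measurable_id)
  have ha : Measurable fun (η : Fin n → ℝ) (i : Fin n) => y + √(1 - σ) * η i :=
    measurable_pi_lambda _ fun i => ((measurable_pi_apply i).const_mul _).const_add _
  have hGy : Measurable fun ζ : Fin n → ℝ => ENNReal.ofReal (normalDensity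
        (Fin.cons σ (fun i => σ + (1 - σ) * u i) : Fin (n + 1) → ℝ) (Fin.cons y ζ)) *
        F (Fin.cons y ζ) :=
    ((measurable_normalDensity _).comp hc).ennreal_ofReal.mul (hF.comp hc)
  rw [lintegral_affine hsb y _ hGy]
  have hFy : Measurable fun η : Fin n → ℝ =>
      F (Fin.cons y (fun i => y + √(1 - σ) * η i)) := hF.comp (hc.comp ha)
  have hinner : ∫⁻ w, F (Fin.cons y (fun i => y + √(1 - σ) * w.eval (u i))) ∂μ =
      ∫⁻ η, ENNReal.ofReal (normalDensity u η) *
        F (Fin.cons y (fun i => y + √(1 - σ) * η i)) := by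
    have h3 := lintegral_map (μ := μ) hFy (measurable_evals u)
    rw [hμ.fdd n u hu hu0 hu1, lintegral_withDensity_eq_lintegral_mul _
      (measurable_normalDensity u).ennreal_ofReal hFy] at h3
    exact h3.symm
  have hm : Measurable fun η : Fin n → ℝ => ENNReal.ofReal (normalDensity u η) *
      F (Fin.cons y (fun i => y + √(1 - σ) * η i)) :=
    (measurable_normalDensity u).ennreal_ofReal.mul hFy
  have hGa : Measurable fun η : Fin n → ℝ => ENNReal.ofReal (normalDensity
        (Fin.cons σ (fun i => σ + (1 - σ) * u i) : Fin (n + 1) → ℝ)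
        (Fin.cons y (fun i => y + √(1 - σ) * η i))) *
        F (Fin.cons y (fun i => y + √(1 - σ) * η i)) := hGy.comp ha
  rw [hinner, ← lintegral_const_mul _ hm,
    ← lintegral_const_mul _ hGa]
  refine lintegral_congr fun η => ?_
  rw [normalDensity_cons h0 h1, ProbabilityTheory.gaussianPDF, ← mul_assoc, ← mul_assoc,
    ← ENNReal.ofReal_mul (by positivity), ← ENNReal.ofReal_mul
      (ProbabilityTheory.gaussianPDFReal_nonneg _ _ _)]
  congr 2
  field_simp

/-- The Markov property of Brownian motion at time `σ`, for finitely many later times. -/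
lemma map_evals_eq {μ : Measure CW} (hμ : IsWienerMeasure μ) {σ : ℝ} (h0 : 0 < σ) (h1 : σ < 1)
    {n : ℕ} (u : Fin n → ℝ) (hu : StrictMono u) (hu0 : ∀ i, 0 < u i) (hu1 : ∀ i, u i ≤ 1) :
    Measure.map (fun (w : CW) (i : Fin (n + 1)) =>
        w.eval ((Fin.cons σ (fun i => σ + (1 - σ) * u i) : Fin (n + 1) → ℝ) i)) μ =
      Measure.map (fun p : ℝ × CW =>
        (Fin.cons p.1 (fun i => p.1 + √(1 - σ) * p.2.eval (u i)) : Fin (n + 1) → ℝ))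
        ((ProbabilityTheory.gaussianReal 0 σ.toNNReal).prod μ) := by
  have := hμ.prob
  have hb : 0 < 1 - σ := by linarith
  have hsb : 0 < √(1 - σ) := Real.sqrt_pos.2 hb
  have hσ : σ.toNNReal ≠ 0 := (Real.toNNReal_pos.2 h0).ne'
  set t : Fin (n + 1) → ℝ := Fin.cons σ (fun i => σ + (1 - σ) * u i) with ht
  have htm : StrictMono t := by
    intro i j hij
    cases j using Fin.cases with
    | zero => exact absurd hij (Fin.not_lt_zero _)
    | succ j =>
      cases i using Fin.cases with
      | zero => simp only [ht, Fin.cons_zero, Fin.cons_succ]; nlinarith [hu0 j]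
      | succ i =>
        simp only [ht, Fin.cons_succ]
        have := hu (Fin.succ_lt_succ_iff.1 hij)
        nlinarith
  have ht0 : ∀ i, 0 < t i := by
    intro i
    cases i using Fin.cases with
    | zero => simpa [ht] using h0
    | succ i => simp only [ht, Fin.cons_succ]; nlinarith [hu0 i]
  have ht1 : ∀ i, t i ≤ 1 := by
    intro i
    cases i using Fin.cases with
    | zero => simpa [ht] using h1.le
    | succ i => simp only [ht, Fin.cons_succ]; nlinarith [hu1 i]
  have hpath : Measurable fun p : ℝ × CW =>
      (Fin.cons p.1 (fun i => p.1 + √(1 - σ) * p.2.eval (u i)) : Fin (n + 1) → ℝ) := by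
    have h (i : Fin n) : Measurable fun w : CW => w.eval (u i) :=
      (CW.continuous_eval_comp continuous_id continuous_const).measurable
    exact measurable_cons.comp (measurable_fst.prodMk (measurable_pi_lambda _ fun i =>
      measurable_fst.add (((h i).comp measurable_snd).const_mul _)))
  refine Measure.ext_of_lintegral _ fun F hF => ?_
  have hFp : Measurable fun p : ℝ × CW =>
      F (Fin.cons p.1 (fun i => p.1 + √(1 - σ) * p.2.eval (u i))) := hF.comp hpath
  rw [hμ.fdd _ t htm ht0 ht1, lintegral_withDensity_eq_lintegral_mul _
    (measurable_normalDensity t).ennreal_ofReal hF, lintegral_map hF hpath,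
    lintegral_prod _ hFp.aemeasurable,
    ProbabilityTheory.gaussianReal_of_var_ne_zero _ hσ,
    lintegral_withDensity_eq_lintegral_mul _ (ProbabilityTheory.measurable_gaussianPDF _ _)
      hFp.lintegral_prod_right']
  have hsplit := ((volume_preserving_piFinSuccAbove (fun _ : Fin (n + 1) => ℝ) 0).symm
    ).lintegral_comp_emb (MeasurableEquiv.measurableEmbedding _)
      ((fun ξ => ENNReal.ofReal (normalDensity t ξ)) * F)
  rw [← hsplit]
  have hGm : Measurable fun p : ℝ × (Fin n → ℝ) =>
      ((fun ξ => ENNReal.ofReal (normalDensity t ξ)) * F) (Fin.cons p.1 p.2) :=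
    ((measurable_normalDensity t).ennreal_ofReal.mul hF).comp measurable_cons
  have hsymm : ∀ p : ℝ × (Fin n → ℝ),
      (MeasurableEquiv.piFinSuccAbove (fun _ : Fin (n + 1) => ℝ) 0).symm p =
        (Fin.cons p.1 p.2 : Fin (n + 1) → ℝ) := fun p => by
    simp [MeasurableEquiv.piFinSuccAbove, Fin.insertNthEquiv]
  simp only [hsymm]
  rw [Measure.volume_eq_prod, lintegral_prod _ hGm.aemeasurable]
  refine lintegral_congr fun y => ?_
  exact lintegral_slice hμ h0 h1 u hu hu0 hu1 y F hF

/-- The law of `w(σ)` is the centred Gaussian law of variance `σ`. -/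
lemma map_eval_eq {μ : Measure CW} (hμ : IsWienerMeasure μ) {σ : ℝ} (h0 : 0 < σ) (h1 : σ ≤ 1) :
    Measure.map (fun w : CW => w.eval σ) μ = ProbabilityTheory.gaussianReal 0 σ.toNNReal := by
  have hσ : σ.toNNReal ≠ 0 := (Real.toNNReal_pos.2 h0).ne'
  have hm : Measurable fun w : CW => w.eval σ :=
    (CW.continuous_eval_comp continuous_id continuous_const).measurable
  have hfdd := hμ.fdd 1 (fun _ => σ) (Subsingleton.strictMono _) (fun _ => h0) (fun _ => h1)
  refine Measure.ext_of_lintegral _ fun F hF => ?_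
  have hF' : Measurable fun ξ : Fin 1 → ℝ => F (ξ 0) := by fun_prop
  have h3 := lintegral_map (μ := μ) hF' (measurable_evals fun _ : Fin 1 => σ)
  rw [hfdd, lintegral_withDensity_eq_lintegral_mul _
    (measurable_normalDensity _).ennreal_ofReal hF'] at h3
  rw [lintegral_map hF hm, ← h3, ProbabilityTheory.gaussianReal_of_var_ne_zero _ hσ,
    lintegral_withDensity_eq_lintegral_mul _ (ProbabilityTheory.measurable_gaussianPDF _ _) hF]
  have hu := ((volume_preserving_funUnique (Fin 1) ℝ).symm).lintegral_comp_emb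
    (MeasurableEquiv.measurableEmbedding _)
      ((fun ξ => ENNReal.ofReal (normalDensity (fun _ : Fin 1 => σ) ξ)) * fun ξ => F (ξ 0))
  refine hu.symm.trans ?_
  refine lintegral_congr fun y => ?_
  simp only [Pi.mul_apply, ProbabilityTheory.gaussianPDF, normalDensity,
    ProbabilityTheory.gaussianPDFReal]
  have e : (MeasurableEquiv.funUnique (Fin 1) ℝ).symm y = fun _ => y := by
    ext i; simp [MeasurableEquiv.funUnique]
  rw [e]
  simp only [Finset.univ_unique, Finset.prod_singleton, Finset.sum_singleton, prevVal,
    Fin.default_eq_zero, Fin.val_zero, dite_true, sub_zero, pow_one, Real.coe_toNNReal σ h0.le]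
  rw [show -(1 / 2) * (y ^ 2 / σ) = -y ^ 2 / (2 * σ) by field_simp]

/-! ### The Markov property for Feynman–Kac functionals -/

/-- Right Riemann sums over the uniform partition of `[0,1]` converge for continuous functions. -/
lemma tendsto_riemann_sum {g : ℝ → ℝ} (hg : Continuous g) :
    Tendsto (fun m : ℕ => 1 / ((m : ℝ) + 1) * ∑ k : Fin (m + 1), g (((k : ℝ) + 1) / ((m : ℝ) + 1)))
      atTop (𝓝 (∫ s in (0:ℝ)..1, g s)) := by
  rw [Metric.tendsto_atTop]
  intro ε hε
  have huc := isCompact_Icc.uniformContinuousOn_of_continuous (hg.continuousOn (s := Set.Icc (0:ℝ) 1))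
  rw [Metric.uniformContinuousOn_iff] at huc
  obtain ⟨δ, hδ, hd⟩ := huc (ε / 2) (by positivity)
  obtain ⟨n₀, hn₀⟩ := exists_nat_one_div_lt hδ
  refine ⟨n₀, fun m hm => ?_⟩
  have hm0 : (0:ℝ) < (m:ℝ) + 1 := by positivity
  have hmδ : 1 / ((m:ℝ) + 1) < δ := lt_of_le_of_lt
    (one_div_le_one_div_of_le (by positivity) (by exact_mod_cast Nat.succ_le_succ hm)) hn₀
  set a : ℕ → ℝ := fun k => (k : ℝ) / ((m : ℝ) + 1) with ha
  have hstep : ∀ k, a (k + 1) - a k = 1 / ((m:ℝ) + 1) := fun k => by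
    simp only [ha]; push_cast; ring
  have hsum := intervalIntegral.sum_integral_adjacent_intervals (f := g) (μ := volume) (a := a)
    (n := m + 1) (fun k _ => hg.intervalIntegrable _ _)
  have ha0 : a 0 = 0 := by simp [ha]
  have ha1 : a (m + 1) = 1 := by simp only [ha]; push_cast; exact div_self hm0.ne'
  rw [ha0, ha1] at hsum
  have hconv : 1 / ((m : ℝ) + 1) * ∑ k : Fin (m + 1), g (((k : ℝ) + 1) / ((m : ℝ) + 1)) =
      ∑ k ∈ Finset.range (m + 1), 1 / ((m : ℝ) + 1) * g (a (k + 1)) := by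
    rw [Finset.mul_sum, Finset.sum_range]
    simp [ha]
  rw [dist_eq_norm, hconv, ← hsum, ← Finset.sum_sub_distrib]
  have hterm : ∀ k ∈ Finset.range (m + 1),
      ‖1 / ((m : ℝ) + 1) * g (a (k + 1)) - ∫ s in a k..a (k + 1), g s‖ ≤
        ε / 2 * (1 / ((m:ℝ) + 1)) := by
    intro k hk
    have hk' : (k : ℝ) + 1 ≤ (m : ℝ) + 1 := by exact_mod_cast Finset.mem_range.1 hk
    have hc : 1 / ((m : ℝ) + 1) * g (a (k + 1)) = ∫ _ in a k..a (k + 1), g (a (k + 1)) := by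
      rw [intervalIntegral.integral_const, hstep, smul_eq_mul]
    rw [hc, ← intervalIntegral.integral_sub (by simp) (hg.intervalIntegrable _ _)]
    have hle : a k ≤ a (k + 1) := by
      have := hstep k
      have : 0 < 1 / ((m:ℝ) + 1) := by positivity
      linarith
    have hk0 : 0 ≤ a k := by positivity
    have hk1 : a (k + 1) ≤ 1 := by
      simp only [ha]; push_cast; exact (div_le_one hm0).2 hk'
    have hb : ∀ s ∈ Set.uIoc (a k) (a (k + 1)), ‖g (a (k + 1)) - g s‖ ≤ ε / 2 := by
      intro s hs
      rw [Set.uIoc_of_le hle] at hs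
      have := hd (a (k + 1)) ⟨by linarith, hk1⟩ s ⟨by linarith [hs.1], by linarith [hs.2]⟩ (by
        rw [Real.dist_eq, abs_of_nonneg (by linarith [hs.2])]
        linarith [hs.1, hstep k])
      rw [dist_eq_norm] at this
      exact this.le
    have := intervalIntegral.norm_integral_le_of_norm_le_const hb
    rwa [hstep, abs_of_pos (by positivity)] at this
  calc _ ≤ ∑ k ∈ Finset.range (m + 1), ε / 2 * (1 / ((m:ℝ) + 1)) := norm_sum_le_of_le _ hterm
    _ = ε / 2 := by
      rw [Finset.sum_const, Finset.card_range, nsmul_eq_mul]; push_cast; field_simp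
    _ < ε := by linarith

instance : FirstCountableTopology CW :=
  inferInstanceAs (FirstCountableTopology
    {w : C(Set.Icc (0:ℝ) 1, ℝ) // w ⟨0, by norm_num⟩ = 0})

lemma gaussianReal_eq_map {σ : ℝ} (h0 : 0 ≤ σ) :
    ProbabilityTheory.gaussianReal 0 σ.toNNReal = stdG.map (√σ * ·) := by
  rw [stdG, ProbabilityTheory.gaussianReal_map_const_mul, mul_zero, mul_one]
  congr 1
  ext
  simp [Real.sq_sqrt h0, h0]

/-- The law of `w(σ)` is that of `√σ Z` with `Z` standard normal, for `0 ≤ σ ≤ 1`. -/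
lemma map_eval_eq_map {μ : Measure CW} (hμ : IsWienerMeasure μ) {σ : ℝ} (h0 : 0 ≤ σ)
    (h1 : σ ≤ 1) : Measure.map (fun w : CW => w.eval σ) μ = stdG.map (√σ * ·) := by
  have := hμ.prob
  rcases h0.eq_or_lt with rfl | h0
  · simp [CW.eval_zero, Measure.map_const]
  · rw [map_eval_eq hμ h0 h1, gaussianReal_eq_map h0.le]

lemma measurable_eval (σ : ℝ) : Measurable fun w : CW => w.eval σ :=
  (CW.continuous_eval_comp continuous_id continuous_const).measurable

lemma integral_eval {μ : Measure CW} (hμ : IsWienerMeasure μ) {σ : ℝ} (h0 : 0 ≤ σ)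
    (h1 : σ ≤ 1) {F : ℝ → ℝ} (hF : Continuous F) :
    ∫ w, F (w.eval σ) ∂μ = ∫ z, F (√σ * z) ∂stdG := by
  rw [← integral_map (measurable_eval σ).aemeasurable hF.aestronglyMeasurable,
    map_eval_eq_map hμ h0 h1, integral_map (by fun_prop) hF.aestronglyMeasurable]

lemma integrable_exp_abs_mul {k a : ℝ} :
    Integrable (fun z => exp (k * |a * z|)) stdG := by
  have : (fun z => exp (k * |a * z|)) = fun z => exp (k * |a| * |z|) := by
    funext z; rw [abs_mul, mul_assoc]
  rw [this]; exact integrable_exp_abs _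

lemma integrable_exp_eval {μ : Measure CW} (hμ : IsWienerMeasure μ) {σ : ℝ} (h0 : 0 ≤ σ)
    (h1 : σ ≤ 1) (k : ℝ) : Integrable (fun w : CW => exp (k * |w.eval σ|)) μ := by
  have h : Integrable (fun y => exp (k * |y|)) (Measure.map (fun w : CW => w.eval σ) μ) := by
    rw [map_eval_eq_map hμ h0 h1]
    exact (integrable_map_measure (by fun_prop) (by fun_prop)).2 integrable_exp_abs_mul
  exact h.comp_measurable (measurable_eval σ)

lemma integral_exp_eval_le {μ : Measure CW} (hμ : IsWienerMeasure μ) {σ : ℝ} (h0 : 0 ≤ σ)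
    (h1 : σ ≤ 1) {k : ℝ} (hk : 0 ≤ k) : ∫ w, exp (k * |w.eval σ|) ∂μ ≤ expMoment k := by
  rw [integral_eval hμ h0 h1 (F := fun y => exp (k * |y|)) (by fun_prop)]
  refine integral_mono integrable_exp_abs_mul (integrable_exp_abs k) fun z => ?_
  have : |√σ * z| ≤ |z| := by
    rw [abs_mul, abs_of_nonneg (Real.sqrt_nonneg _)]
    exact mul_le_of_le_one_left (abs_nonneg _) (Real.sqrt_le_one.2 h1)
  dsimp only
  gcongr

/-- The Markov property of Brownian motion at time `σ` for Feynman–Kac functionals of the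
path after `σ`: given `w(σ)`, the path `r ↦ w(σ + (1-σ)r)` is distributed as
`w(σ) + √(1-σ) w'(r)` with `w'` an independent Brownian motion. -/
lemma markov_formula {μ : Measure CW} (hμ : IsWienerMeasure μ) {σ : ℝ} (h0 : 0 < σ) (h1 : σ < 1)
    {A B : ℝ → ℝ} {h : ℝ → ℝ → ℝ} {K k MB N : ℝ} (hA : Continuous A)
    (hAb : ∀ y, |A y| ≤ K * exp (k * |y|)) (hB : Continuous B) (hBb : ∀ y, |B y| ≤ MB)
    (hh : Continuous fun p : ℝ × ℝ => h p.1 p.2) (hhb : ∀ r y, -N ≤ h r y) :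
    ∫ w, A (w.eval σ) * B (w.eval 1) *
        exp (-∫ r in (0:ℝ)..1, h r (w.eval (σ + (1 - σ) * r))) ∂μ =
      ∫ z, ∫ w, A (√σ * z) * B (√σ * z + √(1 - σ) * w.eval 1) *
        exp (-∫ r in (0:ℝ)..1, h r (√σ * z + √(1 - σ) * w.eval r)) ∂μ ∂stdG := by
  have := hμ.prob
  set G := ProbabilityTheory.gaussianReal 0 σ.toNNReal with hG
  have hMB : 0 ≤ MB := (abs_nonneg _).trans (hBb 0)
  set u : ∀ m : ℕ, Fin (m + 1) → ℝ := fun m k => ((k : ℝ) + 1) / ((m : ℝ) + 1) with hu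
  set J : ∀ m : ℕ, (Fin (m + 1 + 1) → ℝ) → ℝ := fun m ξ => A (ξ 0) * B (ξ (Fin.last m).succ) *
    exp (-(1 / ((m : ℝ) + 1) * ∑ k : Fin (m + 1), h (u m k) (ξ k.succ))) with hJ
  have hJc : ∀ m, Continuous (J m) := fun m => by
    have : ∀ k : Fin (m + 1), Continuous fun ξ : Fin (m + 1 + 1) → ℝ => h (u m k) (ξ k.succ) :=
      fun k => hh.comp (continuous_const.prodMk (continuous_apply _))
    simp only [hJ]
    fun_prop
  have hJb : ∀ m ξ, |J m ξ| ≤ K * exp (k * |ξ 0|) * MB * exp N := fun m ξ => by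
    have hm : (0:ℝ) < (m:ℝ) + 1 := by positivity
    simp only [hJ]
    rw [abs_mul, abs_mul, abs_exp]
    have : -(1 / ((m : ℝ) + 1) * ∑ k : Fin (m + 1), h (u m k) (ξ k.succ)) ≤ N := by
      have h2 : ∑ _k : Fin (m + 1), -N ≤ ∑ k : Fin (m + 1), h (u m k) (ξ k.succ) :=
        Finset.sum_le_sum fun k _ => hhb _ _
      rw [Finset.sum_const, Finset.card_univ, Fintype.card_fin, nsmul_eq_mul] at h2
      push_cast at h2
      have h3 := mul_le_mul_of_nonneg_left h2 (by positivity : 0 ≤ 1 / ((m:ℝ) + 1))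
      have h4 : 1 / ((m:ℝ) + 1) * (((m:ℝ) + 1) * -N) = -N := by field_simp
      linarith
    have hA0 := (abs_nonneg _).trans (hAb (ξ 0))
    gcongr
    · exact hAb _
    · exact hBb _
  have hum : ∀ m, StrictMono (u m) := fun m i j hij => by
    have : ((i : ℕ) : ℝ) < ((j : ℕ) : ℝ) := by exact_mod_cast hij
    simp only [hu]
    gcongr
  have hu0 : ∀ m i, 0 < u m i := fun m i => by simp only [hu]; positivity
  have hu1 : ∀ m i, u m i ≤ 1 := fun m i => by
    simp only [hu]
    rw [div_le_one (by positivity)]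
    exact_mod_cast i.isLt
  have hulast : ∀ m, u m (Fin.last m) = 1 := fun m => by
    simp only [hu, Fin.val_last]
    exact div_self (by positivity)
  have heval : ∀ (f : ℝ → ℝ), Continuous f → ∀ w : CW, Continuous fun r => w.eval (f r) :=
    fun f hf w => by fun_prop
  -- the two sides of the finite-dimensional Markov property, tested against `J m`
  have key : ∀ m, ∫ w : CW, J m (fun i => w.eval
        ((Fin.cons σ (fun i => σ + (1 - σ) * u m i) : Fin (m + 1 + 1) → ℝ) i)) ∂μ =
      ∫ p : ℝ × CW, J m (Fin.cons p.1 (fun i => p.1 + √(1 - σ) * p.2.eval (u m i))) ∂(G.prod μ) := by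
    intro m
    have hpath : Measurable fun p : ℝ × CW =>
        (Fin.cons p.1 (fun i => p.1 + √(1 - σ) * p.2.eval (u m i)) : Fin (m + 1 + 1) → ℝ) :=
      measurable_cons.comp (measurable_fst.prodMk (measurable_pi_lambda _ fun i =>
        measurable_fst.add (((measurable_eval _).comp measurable_snd).const_mul _)))
    rw [← integral_map (measurable_evals _).aemeasurable (hJc m).aestronglyMeasurable,
      map_evals_eq hμ h0 h1 (u m) (hum m) (hu0 m) (hu1 m),
      integral_map hpath.aemeasurable (hJc m).aestronglyMeasurable]
  have limL : Tendsto (fun m => ∫ w : CW, J m (fun i => w.eval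
        ((Fin.cons σ (fun i => σ + (1 - σ) * u m i) : Fin (m + 1 + 1) → ℝ) i)) ∂μ) atTop
      (𝓝 (∫ w, A (w.eval σ) * B (w.eval 1) *
        exp (-∫ r in (0:ℝ)..1, h r (w.eval (σ + (1 - σ) * r))) ∂μ)) := by
    refine tendsto_integral_of_dominated_convergence
      (fun w => K * exp (k * |w.eval σ|) * MB * exp N) (fun m => ?_)
      ((((integrable_exp_eval hμ h0.le h1.le k).const_mul _).mul_const _).mul_const _)
      (fun m => Eventually.of_forall fun w => ?_) (Eventually.of_forall fun w => ?_)
    · exact ((hJc m).measurable.comp (measurable_evals _)).aestronglyMeasurable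
    · rw [norm_eq_abs]
      have := hJb m (fun i => w.eval
        ((Fin.cons σ (fun i => σ + (1 - σ) * u m i) : Fin (m + 1 + 1) → ℝ) i))
      rwa [Fin.cons_zero] at this
    · simp only [hJ, Fin.cons_zero, Fin.cons_succ, hulast,
        show σ + (1 - σ) * 1 = 1 by ring]
      refine ((continuous_exp.tendsto _).comp (Tendsto.neg ?_)).const_mul _
      exact tendsto_riemann_sum (g := fun r => h r (w.eval (σ + (1 - σ) * r)))
        (hh.comp (continuous_id.prodMk (heval _ (by fun_prop) w)))
  have hGexp : Integrable (fun p : ℝ × CW => K * exp (k * |p.1|) * MB * exp N) (G.prod μ) := by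
    have : Integrable (fun y => K * exp (k * |y|) * MB * exp N) G := by
      refine Integrable.mul_const (Integrable.mul_const (Integrable.const_mul ?_ _) _) _
      rw [hG, gaussianReal_eq_map h0.le]
      exact (integrable_map_measure (by fun_prop) (by fun_prop)).2 integrable_exp_abs_mul
    exact this.comp_fst μ
  have hptw : ∀ p : ℝ × CW, Tendsto (fun m =>
      J m (Fin.cons p.1 (fun i => p.1 + √(1 - σ) * p.2.eval (u m i)))) atTop
      (𝓝 (A p.1 * B (p.1 + √(1 - σ) * p.2.eval 1) *
        exp (-∫ r in (0:ℝ)..1, h r (p.1 + √(1 - σ) * p.2.eval r)))) := fun p => by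
    simp only [hJ, Fin.cons_zero, Fin.cons_succ, hulast]
    refine ((continuous_exp.tendsto _).comp (Tendsto.neg ?_)).const_mul _
    exact tendsto_riemann_sum (g := fun r => h r (p.1 + √(1 - σ) * p.2.eval r))
      (hh.comp (continuous_id.prodMk (by fun_prop)))
  have hmeas : ∀ m, AEStronglyMeasurable (fun p : ℝ × CW =>
      J m (Fin.cons p.1 (fun i => p.1 + √(1 - σ) * p.2.eval (u m i)))) (G.prod μ) := fun m =>
    ((hJc m).measurable.comp (measurable_cons.comp (measurable_fst.prodMk
      (measurable_pi_lambda _ fun i => measurable_fst.add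
        (((measurable_eval _).comp measurable_snd).const_mul _))))).aestronglyMeasurable
  have limR : Tendsto (fun m => ∫ p : ℝ × CW, J m (Fin.cons p.1
        (fun i => p.1 + √(1 - σ) * p.2.eval (u m i))) ∂(G.prod μ)) atTop
      (𝓝 (∫ p : ℝ × CW, A p.1 * B (p.1 + √(1 - σ) * p.2.eval 1) *
        exp (-∫ r in (0:ℝ)..1, h r (p.1 + √(1 - σ) * p.2.eval r)) ∂(G.prod μ))) :=
    tendsto_integral_of_dominated_convergence _ hmeas hGexp
      (fun m => Eventually.of_forall fun p => hJb m _) (Eventually.of_forall hptw)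
  rw [tendsto_nhds_unique (limL.congr key) limR]
  have hlimm : AEStronglyMeasurable (fun p : ℝ × CW => A p.1 * B (p.1 + √(1 - σ) * p.2.eval 1) *
        exp (-∫ r in (0:ℝ)..1, h r (p.1 + √(1 - σ) * p.2.eval r))) (G.prod μ) :=
    aestronglyMeasurable_of_tendsto_ae atTop hmeas (Eventually.of_forall hptw)
  have hlimi : Integrable (fun p : ℝ × CW => A p.1 * B (p.1 + √(1 - σ) * p.2.eval 1) *
        exp (-∫ r in (0:ℝ)..1, h r (p.1 + √(1 - σ) * p.2.eval r))) (G.prod μ) :=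
    hGexp.mono' hlimm (Eventually.of_forall fun p =>
      le_of_tendsto (hptw p).norm (Eventually.of_forall fun m => hJb m _))
  rw [integral_prod _ hlimi]
  have hm2 := hlimi.integral_prod_left.aestronglyMeasurable
  rw [hG, gaussianReal_eq_map h0.le] at hm2 ⊢
  exact integral_map (by fun_prop) hm2

/-! ### The Feynman–Kac functional and Duhamel's formula -/

/-- The Feynman–Kac functional with the whole potential gathered in `V`. -/
def FK (μ : Measure CW) (v₀ : ℝ → ℝ) (V : ℝ → ℝ → ℝ) (t x : ℝ) : ℝ :=
  ∫ w : CW, v₀ (x + √(2 * t) * w.eval 1) *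
    exp (-(t * ∫ s in (0:ℝ)..1, V (t * (1 - s)) (x + √(2 * t) * w.eval s))) ∂μ

/-- For `t ≥ 0` the functional only sees `c` at nonnegative times, so `c` can be replaced by any
continuous extension of it. -/
lemma wienerFK_eq_FK {μ : Measure CW} {v₀ : ℝ → ℝ} {c c' : ℝ → ℝ → ℝ}
    (hc' : Continuous fun p : ℝ × ℝ => c' p.1 p.2) (hcc : ∀ r, 0 ≤ r → ∀ y, c r y = c' r y)
    {t : ℝ} (ht : 0 ≤ t) (x : ℝ) :
    wienerFK μ v₀ c t x = FK μ v₀ (fun r y => y ^ 2 + c' r y) t x := by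
  unfold wienerFK FK
  congr 1
  funext w
  have h1 : ∫ s in (0:ℝ)..1, c (t * (1 - s)) (√(2 * t) * w.eval s + x) =
      ∫ s in (0:ℝ)..1, c' (t * (1 - s)) (x + √(2 * t) * w.eval s) := by
    refine intervalIntegral.integral_congr fun s hs => ?_
    rw [Set.uIcc_of_le zero_le_one] at hs
    rw [hcc _ (mul_nonneg ht (by linarith [hs.2])), add_comm]
  have hcont : Continuous fun s => c' (t * (1 - s)) (x + √(2 * t) * w.eval s) :=
    hc'.comp (Continuous.prodMk (by fun_prop) (by fun_prop))
  have hcont2 : Continuous fun s => (x + √(2 * t) * w.eval s) ^ 2 := by fun_prop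
  rw [h1, intervalIntegral.integral_add (hcont2.intervalIntegrable _ _)
    (hcont.intervalIntegrable _ _), mul_assoc, ← exp_add, add_comm (√(2 * t) * w.eval 1)]
  congr 2
  ring

lemma neg_le_integral {q : ℝ → ℝ} {M σ : ℝ} (hM : 0 ≤ M) (hq : Continuous q)
    (hqM : ∀ s, -M ≤ q s) (h0 : 0 ≤ σ) (h1 : σ ≤ 1) : -M ≤ ∫ s in σ..1, q s := by
  have h := intervalIntegral.integral_mono_on h1 (intervalIntegrable_const (c := -M) (μ := volume))
    (hq.intervalIntegrable σ 1) (fun s _ => hqM s)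
  rw [intervalIntegral.integral_const, smul_eq_mul] at h
  nlinarith

section
variable {μ : Measure CW} {v₀ : ℝ → ℝ} {V : ℝ → ℝ → ℝ} {M : ℝ}

lemma FK_integrand_le (hM : 0 ≤ M) (hV : Continuous fun p : ℝ × ℝ => V p.1 p.2)
    (hVM : ∀ r y, -M ≤ V r y) (hv₀b : ∀ y, |v₀ y| ≤ M) {t T : ℝ} (ht : 0 ≤ t) (htT : t ≤ T)
    (x : ℝ) (w : CW) :
    ‖v₀ (x + √(2 * t) * w.eval 1) *
      exp (-(t * ∫ s in (0:ℝ)..1, V (t * (1 - s)) (x + √(2 * t) * w.eval s)))‖ ≤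
      M * exp (T * M) := by
  rw [norm_mul, norm_eq_abs, norm_eq_abs, abs_exp]
  have h := neg_le_integral (q := fun s => V (t * (1 - s)) (x + √(2 * t) * w.eval s)) hM
    (hV.comp (Continuous.prodMk (by fun_prop) (by fun_prop))) (fun s => hVM _ _) le_rfl zero_le_one
  have h2 := mul_le_mul_of_nonneg_left h ht
  gcongr
  · exact hv₀b _
  · nlinarith

lemma abs_FK_le (hμ : IsWienerMeasure μ) (hM : 0 ≤ M)
    (hV : Continuous fun p : ℝ × ℝ => V p.1 p.2)
    (hVM : ∀ r y, -M ≤ V r y) (hv₀b : ∀ y, |v₀ y| ≤ M) {t T : ℝ} (ht : 0 ≤ t) (htT : t ≤ T)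
    (x : ℝ) : |FK μ v₀ V t x| ≤ M * exp (T * M) := by
  have := hμ.prob
  have h := norm_integral_le_of_norm_le_const (μ := μ)
    (Eventually.of_forall fun w => FK_integrand_le hM hV hVM hv₀b ht htT x w)
  rwa [probReal_univ, mul_one] at h

/-- The Feynman–Kac functional is jointly continuous up to time `0`; times are clamped at `0` in
order to state this on the whole plane. -/
lemma continuous_FK (hμ : IsWienerMeasure μ) (hM : 0 ≤ M)
    (hV : Continuous fun p : ℝ × ℝ => V p.1 p.2) (hVM : ∀ r y, -M ≤ V r y)
    (hv₀ : Continuous v₀) (hv₀b : ∀ y, |v₀ y| ≤ M) :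
    Continuous fun p : ℝ × ℝ => FK μ v₀ V (max p.1 0) p.2 := by
  have := hμ.prob
  have hjoint : Continuous fun p : (ℝ × ℝ) × CW =>
      v₀ (p.1.2 + √(2 * max p.1.1 0) * p.2.eval 1) *
      exp (-(max p.1.1 0 * ∫ s in (0:ℝ)..1,
        V (max p.1.1 0 * (1 - s)) (p.1.2 + √(2 * max p.1.1 0) * p.2.eval s))) := by
    have hi : Continuous fun p : (ℝ × ℝ) × CW => ∫ s in (0:ℝ)..1,
        V (max p.1.1 0 * (1 - s)) (p.1.2 + √(2 * max p.1.1 0) * p.2.eval s) := by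
      refine intervalIntegral.continuous_parametric_intervalIntegral_of_continuous' ?_ 0 1
      exact hV.comp (Continuous.prodMk (by fun_prop) (by fun_prop))
    fun_prop
  rw [continuous_iff_continuousAt]
  intro p₀
  unfold FK
  refine continuousAt_of_dominated (bound := fun _ => M * exp ((|p₀.1| + 1) * M))
    (Eventually.of_forall fun p => ?_) ?_ (integrable_const _) (Eventually.of_forall fun w => ?_)
  · exact (hjoint.comp (Continuous.prodMk_right p)).aestronglyMeasurable
  · have h1 : ∀ᶠ p : ℝ × ℝ in 𝓝 p₀, p.1 < |p₀.1| + 1 :=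
      continuous_fst.continuousAt.eventually_lt continuousAt_const
        (by linarith [le_abs_self p₀.1])
    filter_upwards [h1] with p hp
    refine Eventually.of_forall fun w => FK_integrand_le hM hV hVM hv₀b (le_max_right _ _) ?_ _ w
    exact max_le hp.le (by positivity)
  · exact (hjoint.comp (Continuous.prodMk_left w)).continuousAt

lemma FK_zero (hμ : IsWienerMeasure μ) (x : ℝ) : FK μ v₀ V 0 x = v₀ x := by
  have := hμ.prob
  simp [FK]

end

/-- The exponential `exp (t ∫₁^σ q)` at `σ = 0` expanded by the fundamental theorem of
calculus. -/
lemma exp_integral_eq {q : ℝ → ℝ} (hq : Continuous q) (t : ℝ) :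
    exp (-(t * ∫ s in (0:ℝ)..1, q s)) =
      1 - ∫ σ in (0:ℝ)..1, t * q σ * exp (t * ∫ s in (1:ℝ)..σ, q s) := by
  have hd : ∀ σ, HasDerivAt (fun σ => exp (t * ∫ s in (1:ℝ)..σ, q s))
      (t * q σ * exp (t * ∫ s in (1:ℝ)..σ, q s)) σ := fun σ => by
    have h := ((hq.integral_hasStrictDerivAt 1 σ).hasDerivAt.const_mul t).exp
    rwa [mul_comm (exp _)] at h
  have hc : Continuous fun σ => t * q σ * exp (t * ∫ s in (1:ℝ)..σ, q s) := by
    have : Continuous fun σ => exp (t * ∫ s in (1:ℝ)..σ, q s) :=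
      continuous_iff_continuousAt.2 fun σ => (hd σ).continuousAt
    fun_prop
  rw [intervalIntegral.integral_eq_sub_of_hasDerivAt (fun σ _ => hd σ) (hc.intervalIntegrable _ _),
    intervalIntegral.integral_symm 0 1]
  simp

/-- Rescaling of `[σ,1]` to `[0,1]`, which is the clock of the path after time `σ`. -/
lemma integral_one_to (q : ℝ → ℝ) (σ : ℝ) :
    ∫ s in (1:ℝ)..σ, q s = -((1 - σ) * ∫ r in (0:ℝ)..1, q (σ + (1 - σ) * r)) := by
  rw [intervalIntegral.mul_integral_comp_add_mul, intervalIntegral.integral_symm]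
  simp

section
variable {μ : Measure CW} {v₀ : ℝ → ℝ} {V : ℝ → ℝ → ℝ} {M : ℝ}

/-- The time slice `σ` of the Duhamel integral, evaluated by the Markov property. -/
lemma duhamel_slice (hμ : IsWienerMeasure μ) (hM : 0 ≤ M)
    (hV : Continuous fun p : ℝ × ℝ => V p.1 p.2) (hVM : ∀ r y, -M ≤ V r y)
    {K : ℝ} (hK : 0 ≤ K) (hVb : ∀ r y, |V r y| ≤ K * exp |y|)
    (hv₀ : Continuous v₀) (hv₀b : ∀ y, |v₀ y| ≤ M) {t : ℝ} (ht : 0 < t) (x : ℝ)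
    {σ : ℝ} (h0 : 0 < σ) (h1 : σ < 1) :
    ∫ w : CW, v₀ (x + √(2 * t) * w.eval 1) * (V (t * (1 - σ)) (x + √(2 * t) * w.eval σ) *
        exp (t * ∫ s in (1:ℝ)..σ, V (t * (1 - s)) (x + √(2 * t) * w.eval s))) ∂μ =
      heat (t * σ) (fun y => V (t - t * σ) y * FK μ v₀ V (t - t * σ) y) x := by
  have hsσ : √(2 * t) * √σ = √(2 * (t * σ)) := by
    rw [← Real.sqrt_mul (by positivity)]; congr 1; ring
  have hs1 : √(2 * t) * √(1 - σ) = √(2 * (t - t * σ)) := by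
    rw [← Real.sqrt_mul (by positivity)]; congr 1; ring
  have hm := markov_formula hμ h0 h1 (K := K * exp |x|) (k := √(2 * t)) (MB := M) (N := t * M)
    (A := fun y => V (t * (1 - σ)) (x + √(2 * t) * y)) (B := fun y => v₀ (x + √(2 * t) * y))
    (h := fun r y => t * (1 - σ) * V (t * (1 - σ) * (1 - r)) (x + √(2 * t) * y))
    (hV.comp (Continuous.prodMk (by fun_prop) (by fun_prop))) (fun y => by
      refine (hVb _ _).trans ?_
      rw [mul_assoc, ← exp_add]
      gcongr
      refine (abs_add_le _ _).trans ?_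
      rw [abs_mul, abs_of_nonneg (Real.sqrt_nonneg _)])
    (by fun_prop) (fun y => hv₀b _)
    (continuous_const.mul (hV.comp (Continuous.prodMk (by fun_prop) (by fun_prop))))
    (fun r y => by
      have h2 := mul_le_mul_of_nonneg_left (hVM (t * (1 - σ) * (1 - r)) (x + √(2 * t) * y))
        (mul_nonneg ht.le (by linarith : 0 ≤ 1 - σ))
      nlinarith [mul_nonneg ht.le hM, mul_nonneg (mul_nonneg ht.le hM) h0.le])
  calc _ = _ := by
        congr 1
        funext w
        rw [mul_left_comm, ← mul_assoc, integral_one_to]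
        congr 2
        rw [mul_neg, ← mul_assoc, ← intervalIntegral.integral_const_mul]
        congr 2
        funext r
        rw [show t * (1 - (σ + (1 - σ) * r)) = t * (1 - σ) * (1 - r) by ring]
    _ = _ := hm
    _ = _ := by
        unfold heat
        congr 1
        funext z
        beta_reduce
        rw [FK, ← integral_const_mul]
        congr 1
        funext w
        have e1 : x + √(2 * t) * (√σ * z) = x + √(2 * (t * σ)) * z := by rw [← hsσ]; ring
        have e2 : ∀ r, x + √(2 * t) * (√σ * z + √(1 - σ) * w.eval r) =
            x + √(2 * (t * σ)) * z + √(2 * (t - t * σ)) * w.eval r := fun r => by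
          rw [← hsσ, ← hs1]; ring
        have e3 : t * (1 - σ) = t - t * σ := by ring
        simp only [e1, e2, e3, intervalIntegral.integral_const_mul]
        ring

/-- Duhamel's formula for the Feynman–Kac functional. -/
lemma FK_duhamel (hμ : IsWienerMeasure μ) (hM : 0 ≤ M)
    (hV : Continuous fun p : ℝ × ℝ => V p.1 p.2) (hVM : ∀ r y, -M ≤ V r y)
    {K : ℝ} (hK : 0 ≤ K) (hVb : ∀ r y, |V r y| ≤ K * exp |y|)
    (hv₀ : Continuous v₀) (hv₀b : ∀ y, |v₀ y| ≤ M) {t : ℝ} (ht : 0 < t) (x : ℝ) :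
    FK μ v₀ V t x = heat t v₀ x - heatPot (fun r y => V r y * FK μ v₀ V r y) t x := by
  have := hμ.prob
  set a := √(2 * t) with ha
  have ha0 : 0 ≤ a := Real.sqrt_nonneg _
  set Q : CW → ℝ → ℝ := fun w s => V (t * (1 - s)) (x + a * w.eval s) with hQ
  have hQc : Continuous fun p : CW × ℝ => Q p.1 p.2 :=
    hV.comp (Continuous.prodMk (by fun_prop) (by fun_prop))
  have hQw : ∀ w, Continuous (Q w) := fun w => hQc.comp (Continuous.prodMk_right w)
  set f : ℝ → CW → ℝ := fun σ w => v₀ (x + a * w.eval 1) *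
    (t * Q w σ * exp (t * ∫ s in (1:ℝ)..σ, Q w s)) with hf
  have hfc : Continuous fun p : ℝ × CW => f p.1 p.2 := by
    have h1 : Continuous fun p : ℝ × CW => ∫ s in (1:ℝ)..p.1, Q p.2 s := by
      refine intervalIntegral.continuous_parametric_intervalIntegral_of_continuous
        (f := fun (p : ℝ × CW) s => Q p.2 s) ?_ continuous_fst
      exact hQc.comp (Continuous.prodMk (by fun_prop) (by fun_prop))
    have h2 : Continuous fun p : ℝ × CW => Q p.2 p.1 :=
      hQc.comp (continuous_snd.prodMk continuous_fst)
    fun_prop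
  have hfb : ∀ σ, 0 ≤ σ → σ ≤ 1 → ∀ w, ‖f σ w‖ ≤
      M * (t * (K * exp |x|) * exp (t * M)) * exp (a * |w.eval σ|) := by
    intro σ h0 h1 w
    have hq : |Q w σ| ≤ K * exp |x| * exp (a * |w.eval σ|) := by
      refine (hVb _ _).trans ?_
      rw [mul_assoc, ← exp_add]
      gcongr
      refine (abs_add_le _ _).trans ?_
      rw [abs_mul, abs_of_nonneg ha0]
    have he : exp (t * ∫ s in (1:ℝ)..σ, Q w s) ≤ exp (t * M) := by
      have := neg_le_integral hM (hQw w) (fun s => hVM _ _) h0 h1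
      rw [intervalIntegral.integral_symm]
      gcongr
      linarith
    simp only [hf]
    rw [norm_mul, norm_mul, norm_mul, norm_eq_abs, norm_eq_abs, norm_eq_abs, norm_eq_abs, abs_exp,
      abs_of_pos ht]
    calc _ ≤ M * (t * (K * exp |x| * exp (a * |w.eval σ|)) * exp (t * M)) := by
          gcongr
          exact hv₀b _
      _ = _ := by ring
  set C := M * (t * (K * exp |x|) * exp (t * M)) with hC
  have hC0 : 0 ≤ C := by positivity
  have hslice : ∀ σ, 0 ≤ σ → σ ≤ 1 → Integrable (f σ) μ := fun σ h0 h1 =>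
    ((integrable_exp_eval hμ h0 h1 a).const_mul C).mono'
      (hfc.comp (Continuous.prodMk_right σ)).aestronglyMeasurable
      (Eventually.of_forall (hfb σ h0 h1))
  have hint : Integrable (Function.uncurry f)
      ((volume.restrict (Set.uIoc (0:ℝ) 1)).prod μ) := by
    rw [Set.uIoc_of_le zero_le_one]
    refine (integrable_prod_iff hfc.aestronglyMeasurable).2 ?_
    have hmem : ∀ᵐ σ ∂(volume.restrict (Set.Ioc (0:ℝ) 1)), σ ∈ Set.Ioc (0:ℝ) 1 :=
      ae_restrict_mem measurableSet_Ioc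
    refine ⟨hmem.mono fun σ hσ => hslice σ hσ.1.le hσ.2, ?_⟩
    refine Integrable.mono' (integrable_const (C * expMoment a))
      hfc.norm.aestronglyMeasurable.integral_prod_right' (hmem.mono fun σ hσ => ?_)
    rw [norm_eq_abs, abs_of_nonneg (integral_nonneg fun _ => norm_nonneg _)]
    calc _ ≤ ∫ w, C * exp (a * |w.eval σ|) ∂μ :=
          integral_mono (hslice σ hσ.1.le hσ.2).norm
            ((integrable_exp_eval hμ hσ.1.le hσ.2 a).const_mul C) (hfb σ hσ.1.le hσ.2)
      _ ≤ _ := by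
          rw [integral_const_mul]
          exact mul_le_mul_of_nonneg_left (integral_exp_eval_le hμ hσ.1.le hσ.2 ha0) hC0
  have hswap := intervalIntegral_integral_swap hint
  have hv0i : Integrable (fun w : CW => v₀ (x + a * w.eval 1)) μ :=
    Integrable.mono' (integrable_const M)
      (hv₀.comp (by fun_prop : Continuous fun w : CW => x + a * w.eval 1)).aestronglyMeasurable
      (Eventually.of_forall fun w => hv₀b _)
  have hfi : Integrable (fun w => ∫ σ in (0:ℝ)..1, f σ w) μ := by
    have := hint.swap.integral_prod_left
    rw [Set.uIoc_of_le zero_le_one] at this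
    simp only [intervalIntegral.integral_of_le zero_le_one]
    exact this
  have hFK : FK μ v₀ V t x = ∫ w, (v₀ (x + a * w.eval 1) - ∫ σ in (0:ℝ)..1, f σ w) ∂μ := by
    unfold FK
    congr 1
    funext w
    have := exp_integral_eq (hQw w) t
    rw [show (fun s => V (t * (1 - s)) (x + √(2 * t) * w.eval s)) = Q w from rfl, this]
    simp only [hf, intervalIntegral.integral_const_mul]
    ring
  rw [hFK, integral_sub hv0i hfi, ← hswap]
  congr 1
  · rw [integral_eval hμ zero_le_one le_rfl (F := fun y => v₀ (x + a * y)) (by fun_prop), heat]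
    simp [ha]
  · have hpt : ∀ σ, σ ∈ Set.Ioo (0:ℝ) 1 → ∫ w, f σ w ∂μ =
        t * heat (t * σ) (fun y => V (t - t * σ) y * FK μ v₀ V (t - t * σ) y) x := by
      intro σ hσ
      rw [← duhamel_slice hμ hM hV hVM hK hVb hv₀ hv₀b ht x hσ.1 hσ.2, ← integral_const_mul]
      congr 1
      funext w
      simp only [hf]
      ring
    have hcongr : ∫ σ in (0:ℝ)..1, ∫ w, f σ w ∂μ = ∫ σ in (0:ℝ)..1,
        t * heat (t * σ) (fun y => V (t - t * σ) y * FK μ v₀ V (t - t * σ) y) x := by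
      rw [intervalIntegral.integral_of_le zero_le_one, intervalIntegral.integral_of_le zero_le_one,
        integral_Ioc_eq_integral_Ioo, integral_Ioc_eq_integral_Ioo]
      exact setIntegral_congr_fun measurableSet_Ioo hpt
    rw [hcongr, intervalIntegral.integral_const_mul,
      intervalIntegral.mul_integral_comp_mul_left
        (f := fun s => heat s (fun y => V (t - s) y * FK μ v₀ V (t - s) y) x)]
    simp [heatPot]

end

/-! ### The differential equation and its initial condition -/

/-- **Theorem (preliminary version of the main theorem).** Under strong regularity
assumptions on `v₀` and `c`, the Feynman–Kac type Wiener integral `v(t,x)` solves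
`∂v/∂t − ∂²v/∂x² + (x² + c)v = 0` on `(0,∞)×ℝ` with initial condition `v₀`. -/
theorem wienerFK_is_solution_weak
    (μ : Measure CW) (hμ : IsWienerMeasure μ)
    (v₀ : ℝ → ℝ) (hv₀ : ContDiff ℝ 4 v₀)
    (hv₀d : ∀ j ≤ 4, ∃ M : ℝ, ∀ x : ℝ, |iteratedDeriv j v₀ x| ≤ M)
    (hv₀0 : Tendsto v₀ (cocompact ℝ) (𝓝 0))
    (c : ℝ → ℝ → ℝ)
    (hc_cont : ContinuousOn (fun p : ℝ × ℝ => c p.1 p.2) (Set.Ici 0 ×ˢ Set.univ))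
    (hc_bdd : ∃ M : ℝ, ∀ s ∈ Set.Ici (0:ℝ), ∀ x : ℝ, |c s x| ≤ M)
    (hc_C1 : ContDiffOn ℝ 1 (fun p : ℝ × ℝ => c p.1 p.2) (Set.Ioi 0 ×ˢ Set.univ))
    (hc_space : ∀ j ≤ 4,
      ContinuousOn (fun p : ℝ × ℝ => iteratedDeriv j (fun y => c p.1 y) p.2)
        (Set.Ioi 0 ×ˢ Set.univ) ∧
      ∃ M : ℝ, ∀ s > (0:ℝ), ∀ x : ℝ, |iteratedDeriv j (fun y => c s y) x| ≤ M)
    :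
    (∀ t > (0:ℝ), ∀ x : ℝ,
        DifferentiableAt ℝ (fun τ => wienerFK μ v₀ c τ x) t ∧
        DifferentiableAt ℝ (fun y => wienerFK μ v₀ c t y) x ∧
        DifferentiableAt ℝ (deriv (fun y => wienerFK μ v₀ c t y)) x ∧
        deriv (fun τ => wienerFK μ v₀ c τ x) t
          - deriv (deriv (fun y => wienerFK μ v₀ c t y)) x
          + (x ^ 2 + c t x) * wienerFK μ v₀ c t x = 0) ∧
    (∀ x : ℝ, Tendsto (fun t => wienerFK μ v₀ c t x) (𝓝[>] (0:ℝ)) (𝓝 (v₀ x))) := by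
  obtain ⟨M₁, hM₁⟩ := hc_bdd
  obtain ⟨hcx_cont, M₂, hM₂⟩ := hc_space 1 (by norm_num)
  obtain ⟨M₃, hM₃⟩ := hv₀d 0 (by norm_num)
  obtain ⟨M₄, hM₄⟩ := hv₀d 1 (by norm_num)
  simp only [iteratedDeriv_one, iteratedDeriv_zero] at hcx_cont hM₂ hM₃ hM₄
  set M : ℝ := |M₁| + |M₂| + |M₃| + |M₄| with hMdef
  have hM : 0 ≤ M := by positivity
  have l₁ : M₁ ≤ M := by
    linarith [le_abs_self M₁, abs_nonneg M₂, abs_nonneg M₃, abs_nonneg M₄]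
  have l₂ : M₂ ≤ M := by
    linarith [le_abs_self M₂, abs_nonneg M₁, abs_nonneg M₃, abs_nonneg M₄]
  have l₃ : M₃ ≤ M := by
    linarith [le_abs_self M₃, abs_nonneg M₂, abs_nonneg M₁, abs_nonneg M₄]
  have l₄ : M₄ ≤ M := by
    linarith [le_abs_self M₄, abs_nonneg M₂, abs_nonneg M₃, abs_nonneg M₁]
  -- extend `c` by its initial values to negative times, so that it is continuous on the plane
  set c' : ℝ → ℝ → ℝ := fun r y => c (max r 0) y with hc'
  have hcc : ∀ r, 0 ≤ r → ∀ y, c r y = c' r y := fun r hr y => by simp [hc', hr]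
  have hcc_fun : ∀ r, 0 < r → c' r = c r := fun r hr => funext fun y => (hcc r hr.le y).symm
  have hc'c : Continuous fun p : ℝ × ℝ => c' p.1 p.2 :=
    hc_cont.comp_continuous (f := fun p : ℝ × ℝ => (max p.1 0, p.2)) (by fun_prop)
      fun p => ⟨(le_max_right p.1 0 : (0:ℝ) ≤ max p.1 0), trivial⟩
  have hc'b : ∀ r y, |c' r y| ≤ M := fun r y => (hM₁ _ (Set.mem_Ici.2 (le_max_right _ _)) y).trans l₁
  set V : ℝ → ℝ → ℝ := fun r y => y ^ 2 + c' r y with hV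
  have hVc : Continuous fun p : ℝ × ℝ => V p.1 p.2 := by
    simp only [hV]
    fun_prop
  have hVM : ∀ r y, -M ≤ V r y := fun r y => by
    have := (abs_le.1 (hc'b r y)).1
    simp only [hV]
    nlinarith [sq_nonneg y]
  have hVb : ∀ r y, |V r y| ≤ (2 + M) * exp |y| := fun r y => by
    have h1 : |V r y| ≤ y ^ 2 + M := by
      refine (abs_add_le _ _).trans ?_
      rw [abs_of_nonneg (sq_nonneg y)]
      linarith [hc'b r y]
    nlinarith [sq_le_exp_abs y, one_le_exp (abs_nonneg y)]
  have hv₀c : Continuous v₀ := hv₀.continuous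
  have hv₀b : ∀ y, |v₀ y| ≤ M := fun y => (hM₃ y).trans l₃
  have hfk : ∀ t, 0 ≤ t → ∀ y, wienerFK μ v₀ c t y = FK μ v₀ V t y :=
    fun t ht y => wienerFK_eq_FK hc'c hcc ht y
  set v : ℝ → ℝ → ℝ := fun t y => FK μ v₀ V (max t 0) y with hv
  have hvc : Continuous fun p : ℝ × ℝ => v p.1 p.2 := continuous_FK hμ hM hVc hVM hv₀c hv₀b
  have hvfk : ∀ t, 0 ≤ t → ∀ y, v t y = FK μ v₀ V t y := fun t ht y => by simp [hv, ht]
  have hopen : IsOpen (Set.Ioi (0:ℝ) ×ˢ (Set.univ : Set ℝ)) := isOpen_Ioi.prod isOpen_univ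
  have hD : ∀ t, 0 < t → ∀ y,
      v t y = heat t v₀ y - heatPot (fun r y => (y ^ 2 + c' r y) * v r y) t y := by
    intro t ht y
    rw [hvfk t ht.le, FK_duhamel hμ hM hVc hVM (by positivity) hVb hv₀c hv₀b ht]
    congr 1
    refine intervalIntegral.integral_congr fun s hs => ?_
    rw [Set.uIcc_of_le ht.le] at hs
    have : ∀ y, v (t - s) y = FK μ v₀ V (t - s) y := hvfk _ (by linarith [hs.2])
    simp only [this, hV]
  refine ⟨fun t ht x => ?_, fun x => ?_⟩
  · obtain ⟨v₁, Dt, D₂, h1, h2, h3, h4⟩ := mild_solution_is_classical (v := v) (c := c')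
      (cx := fun r y => deriv (c r) y) (v₀ := v₀) (v₀' := deriv v₀) hM hvc
      (fun T => ⟨M * exp (T * M), by positivity, fun r hr hrT y => by
        rw [hvfk r hr.le]
        exact abs_FK_le hμ hM hVc hVM hv₀b hr.le hrT y⟩)
      hc'c hc'b
      (fun r hr y => by
        rw [hcc_fun r hr]
        have h1 : DifferentiableAt ℝ (fun p : ℝ × ℝ => c p.1 p.2) (r, y) :=
          (hc_C1.differentiableOn one_ne_zero).differentiableAt
            (hopen.mem_nhds ⟨hr, trivial⟩)
        have h2 : DifferentiableAt ℝ (fun y => c r y) y :=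
          h1.comp (f := fun y => (r, y)) y (by fun_prop)
        exact h2.hasDerivAt)
      (fun r hr y => hcx_cont.continuousAt (hopen.mem_nhds ⟨hr, trivial⟩))
      (fun r hr y => (hM₂ r hr y).trans l₂) hv₀b
      (fun y => (hv₀.differentiable (by norm_num) y).hasDerivAt)
      (hv₀.continuous_deriv (by norm_num)) (fun y => (hM₄ y).trans l₄) hD ht x
    have e1 : (fun τ => wienerFK μ v₀ c τ x) =ᶠ[𝓝 t] fun τ => v τ x := by
      filter_upwards [lt_mem_nhds ht] with τ hτ
      rw [hfk τ hτ.le, hvfk τ hτ.le]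
    have e2 : (fun y => wienerFK μ v₀ c t y) = v t := funext fun y => by
      rw [hfk t ht.le, hvfk t ht.le]
    have e3 : deriv (v t) = v₁ := funext fun y => (h2 y).deriv
    have h1' := h1.congr_of_eventuallyEq e1
    rw [e2, e3, h1'.deriv, h3.deriv, hcc t ht.le, show wienerFK μ v₀ c t x = v t x from
      congrFun e2 x]
    exact ⟨h1'.differentiableAt, (h2 x).differentiableAt, h3.differentiableAt, h4⟩
  · have h : Tendsto (fun t => v t x) (𝓝 0) (𝓝 (v 0 x)) :=
      (hvc.comp (Continuous.prodMk_left x)).tendsto 0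
    rw [hvfk 0 le_rfl, FK_zero hμ] at h
    refine (h.mono_left nhdsWithin_le_nhds).congr' ?_
    filter_upwards [self_mem_nhdsWithin] with t ht
    rw [hfk t (le_of_lt ht), hvfk t (le_of_lt ht)]

end
end
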